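/- Let k ≥ 2 be an integer and δ > 0 a constant. There exists a deterministic online strategy for Builder such that, with high probability, Builder purchases at most (k/2 + 2^{−k} + δ)·n edges among e_1, …, e_{τ_k} and her graph B_{τ_k} has minimum degree at least k. -/

import Mathlib

open Finset Filter

namespace RGP

/-- Number of edges of the complete graph on `n` vertices. -/
def numEdges (n : ℕ) : ℕ := n * (n - 1) / 2

/-- An edge of the complete graph on `Fin n` (an unordered pair of distinct vertices). -/
abbrev EdgeType (n : ℕ) := {e : Sym2 (Fin n) // ¬ e.IsDiag}

/-- A uniformly random permutation of the edges of `K_n` is modelled by a bijection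
`σ` between positions `Fin (numEdges n)` and edges; `σ i` is the edge `e_{i+1}`. -/
abbrev Ord (n : ℕ) := Fin (numEdges n) ≃ EdgeType n

/-- Degree of a vertex `v` in a set `S` of edges. -/
def deg {n : ℕ} (S : Finset (Sym2 (Fin n))) (v : Fin n) : ℕ :=
  (S.filter (fun e => v ∈ e)).card

/-- The edge set `{e_1, …, e_m}` of `G_{n,m}` in the random graph process `σ`. -/
def procEdges {n : ℕ} (σ : Ord n) (m : ℕ) : Finset (Sym2 (Fin n)) :=
  (Finset.univ.filter (fun i : Fin (numEdges n) => (i : ℕ) < m)).image (fun i => (σ i).1)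

/-- The hitting time `τ_k` for minimum degree at least `k`. -/
noncomputable def tau {n : ℕ} (k : ℕ) (σ : Ord n) : ℕ :=
  sInf {m | ∀ v : Fin n, k ≤ deg (procEdges σ m) v}

open scoped Classical in
/-- The probability of an event under the uniformly random edge ordering. -/
noncomputable def Pr {n : ℕ} (p : Ord n → Prop) : ℝ :=
  ((Finset.univ : Finset (Ord n)).filter p).card / (Fintype.card (Ord n) : ℝ)

/-- A deterministic online strategy: given the sequence of edges revealed so far
(the last entry being the edge just revealed), decide whether to purchase it. -/
abbrev Strategy (n : ℕ) := List (Sym2 (Fin n)) → Bool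

/-- The list of the first `i` revealed edges `e_1, …, e_i`. -/
def prefixList {n : ℕ} (σ : Ord n) (i : ℕ) : List (Sym2 (Fin n)) :=
  (List.range i).filterMap (fun j => if h : j < numEdges n then some (σ ⟨j, h⟩).1 else none)

/-- `buy st σ i` is the edge set of Builder's graph `B_i`: the edges purchased by the
strategy `st` among `e_1, …, e_i`. -/
def buy {n : ℕ} (st : Strategy n) (σ : Ord n) : ℕ → Finset (Sym2 (Fin n))
  | 0 => ∅
  | i + 1 =>
    if h : i < numEdges n then
      if st (prefixList σ (i + 1)) then insert (σ ⟨i, h⟩).1 (buy st σ i)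
      else buy st σ i
    else buy st σ i

end RGP

/-!
Builder buys in three phases: at first only edges with an isolated endpoint, then also edges whose
two endpoints both have degree less than `k`, and finally all edges with an endpoint of degree less
than `k`. The first two phases have the same length `M`, which is slightly superlinear in `n`.

Twice the number of edges bought is at most `k * n` plus the excess, the sum over all vertices of
the number of edges bought beyond `k`. The second phase can raise the excess only by the number of
vertices isolated at its start, and the third only by the total amount by which degrees fall short
of `k` at its start. Both are `o(n)`: as long as linearly many vertices are deficient, quadratically
many edges join two of them, so each step makes progress with probability bounded away from `0`. In
the first phase `2 ^ (k - 1) * n * X + I * W` is a supermartingale, where `X` is the excess, `I` the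
number of isolated vertices and `W` the sum of `2 ^ min d k` over the degrees `d`. It starts at
`n ^ 2`, so by Chebyshev's inequality `X` is at most `(2 / 2 ^ k + o(1)) * n` in the end.

A vertex that is isolated in `G_{2M}` has all its first `k` edges bought, and any other vertex has
positive degree in Builder's graph at time `2M`; hence it suffices that every vertex gains at least
`k - 1` edges after time `2M`. With high probability this already holds shortly before `τ_k`, at the
time `m = n / 2 * (log n + (k - 3 / 2) * log (log n))`: the expected number of vertices gaining
`j ≤ k - 2` edges between `2M` and `m` tends to `0`, whereas that of vertices of degree `k - 1` in
`G_m` tends to infinity, and by the second moment method such vertices exist, so `m ≤ τ_k`.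
-/

namespace RGP

open scoped BigOperators Nat
open Asymptotics Topology

section Probability

variable {n : ℕ}

lemma card_edgeType (n : ℕ) : Fintype.card (EdgeType n) = numEdges n := by
  simpa [numEdges, Nat.choose_two_right] using Sym2.card_subtype_not_diag (α := Fin n)

instance : Nonempty (Ord n) :=
  ⟨(Fintype.equivFinOfCardEq (card_edgeType n)).symm⟩

lemma Pr_eq_expect (p : Ord n → Prop) [DecidablePred p] :
    Pr p = 𝔼 σ, if p σ then (1 : ℝ) else 0 := by
  rw [Fintype.expect_eq_sum_div_card, sum_boole, Pr]
  congr!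

lemma Pr_nonneg (p : Ord n → Prop) : 0 ≤ Pr p := by
  unfold Pr; positivity

lemma Pr_mono {p q : Ord n → Prop} (h : ∀ σ, p σ → q σ) : Pr p ≤ Pr q := by
  unfold Pr
  gcongr with σ
  exact h σ

lemma Pr_not (p : Ord n → Prop) : Pr (fun σ => ¬ p σ) = 1 - Pr p := by
  classical
  rw [Pr_eq_expect, Pr_eq_expect, eq_sub_iff_add_eq, ← expect_add_distrib,
    ← Fintype.expect_const (ι := Ord n) (1 : ℝ)]
  exact expect_congr rfl fun σ _ => by by_cases hp : p σ <;> simp [hp]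

lemma Pr_le_one (p : Ord n → Prop) : Pr p ≤ 1 := by
  linarith [Pr_not p, Pr_nonneg fun σ => ¬ p σ]

lemma Pr_le_expect_div {p : Ord n → Prop} {f : Ord n → ℝ} {c : ℝ} (hf : ∀ σ, 0 ≤ f σ)
    (hc : 0 < c) (hp : ∀ σ, p σ → c ≤ f σ) : Pr p ≤ (𝔼 σ, f σ) / c := by
  classical
  rw [le_div_iff₀ hc, Pr_eq_expect, expect_mul]
  refine expect_le_expect fun σ _ => ?_
  split_ifs with h
  · simpa using hp σ h
  · simpa using hf σ

lemma Pr_exists_le {ι : Type*} (s : Finset ι) (p : ι → Ord n → Prop) :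
    Pr (fun σ => ∃ i ∈ s, p i σ) ≤ ∑ i ∈ s, Pr (p i) := by
  classical
  simp_rw [Pr_eq_expect (p _), ← expect_sum_comm, sum_boole]
  refine (Pr_le_expect_div (fun σ => by positivity) one_pos ?_).trans_eq (div_one _)
  rintro σ ⟨i, hi, hp⟩
  exact_mod_cast card_pos.2 ⟨i, mem_filter.2 ⟨hi, hp⟩⟩

lemma Pr_or_le (p q : Ord n → Prop) : Pr (fun σ => p σ ∨ q σ) ≤ Pr p + Pr q := by
  simpa [or_comm] using Pr_exists_le univ fun b : Bool => if b then p else q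

lemma expect_swap (i j : Fin (numEdges n)) (f : Ord n → ℝ) :
    𝔼 σ, f ((Equiv.swap i j).trans σ) = 𝔼 σ, f σ :=
  Fintype.expect_equiv (Equiv.equivCongr (Equiv.swap i j) (Equiv.refl _)) _ _ fun σ => by
    simp [Equiv.equivCongr]

lemma expect_next_edge (i : Fin (numEdges n)) (f : Ord n → EdgeType n → ℝ)
    (hf : ∀ σ j, i ≤ j → f ((Equiv.swap i j).trans σ) = f σ) :
    ((numEdges n : ℝ) - i) * 𝔼 σ, f σ (σ i) = 𝔼 σ, ∑ j ∈ Ici i, f σ (σ j) := by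
  have hconst : ∀ j ∈ Ici i, 𝔼 σ, f σ (σ j) = 𝔼 σ, f σ (σ i) := fun j hj => by
    rw [← expect_swap i j fun σ => f σ (σ i)]
    exact expect_congr rfl fun σ _ => by simp [hf σ j (mem_Ici.1 hj)]
  rw [expect_sum_comm, sum_congr rfl hconst, sum_const, Fin.card_Ici, nsmul_eq_mul,
    Nat.cast_sub i.2.le]

end Probability

section Rules

variable {n : ℕ}

lemma mem_procEdges (σ : Ord n) {i : ℕ} {e : Sym2 (Fin n)} :
    e ∈ procEdges σ i ↔ ∃ j : Fin (numEdges n), (j : ℕ) < i ∧ (σ j).1 = e := by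
  simp [procEdges]

lemma procEdges_succ (σ : Ord n) {i : ℕ} (hi : i < numEdges n) :
    procEdges σ (i + 1) = insert (σ ⟨i, hi⟩).1 (procEdges σ i) := by
  ext e
  simp only [mem_insert, mem_procEdges, Nat.lt_succ_iff_lt_or_eq, or_and_right, exists_or]
  rw [or_comm]
  refine or_congr_left ⟨?_, fun h => ⟨⟨i, hi⟩, rfl, h.symm⟩⟩
  rintro ⟨j, rfl, h⟩
  exact h.symm

lemma procEdges_succ_of_le (σ : Ord n) {i : ℕ} (hi : numEdges n ≤ i) :
    procEdges σ (i + 1) = procEdges σ i := by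
  ext e
  simp only [mem_procEdges]
  exact exists_congr fun j => and_congr_left' (by lia)

lemma procEdges_mono (σ : Ord n) : Monotone (procEdges σ) := fun i j hij e => by
  simp only [mem_procEdges]
  exact Exists.imp fun l hl => ⟨hl.1.trans_le hij, hl.2⟩

lemma notMem_procEdges (σ : Ord n) {i : ℕ} {j : Fin (numEdges n)} (hij : i ≤ j) :
    (σ j).1 ∉ procEdges σ i := fun h => by
  obtain ⟨l, hl, hlj⟩ := (mem_procEdges σ).1 h
  rw [σ.injective (Subtype.ext hlj)] at hl
  lia

/-- A purchasing rule: a strategy that only looks at the number of edges revealed before, at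
Builder's current graph and at the new edge. -/
abbrev Rule (n : ℕ) := ℕ → Finset (Sym2 (Fin n)) → Sym2 (Fin n) → Prop

namespace Rule

open scoped Classical in
/-- Builder's graph after the edge `e` is revealed at time `i`, if it was `B` before. -/
noncomputable def step (R : Rule n) (i : ℕ) (B : Finset (Sym2 (Fin n))) (e : Sym2 (Fin n)) :
    Finset (Sym2 (Fin n)) :=
  if R i B e then insert e B else B

/-- Builder's graph after a list of edges has been revealed, if she follows the rule `R`. -/
noncomputable def play (R : Rule n) (L : List (Sym2 (Fin n))) : Finset (Sym2 (Fin n)) :=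
  L.zipIdx.foldl (fun B p => R.step p.2 B p.1) ∅

open scoped Classical in
/-- The online strategy that follows the rule `R`. -/
noncomputable def strategy (R : Rule n) : Strategy n := fun L =>
  decide (∃ e ∈ L.getLast?, R L.dropLast.length (R.play L.dropLast) e)

/-- Builder's graph `B_i`, if she follows the rule `R` on the edge ordering `σ`. -/
noncomputable def run (R : Rule n) (σ : Ord n) (i : ℕ) : Finset (Sym2 (Fin n)) :=
  R.play (prefixList σ i)

end Rule

lemma prefixList_succ (σ : Ord n) {i : ℕ} (hi : i < numEdges n) :
    prefixList σ (i + 1) = prefixList σ i ++ [(σ ⟨i, hi⟩).1] := by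
  simp [prefixList, List.range_succ, hi]

lemma prefixList_succ_of_le (σ : Ord n) {i : ℕ} (hi : numEdges n ≤ i) :
    prefixList σ (i + 1) = prefixList σ i := by
  simp [prefixList, List.range_succ, hi.not_gt]

lemma length_prefixList (σ : Ord n) {i : ℕ} (hi : i ≤ numEdges n) :
    (prefixList σ i).length = i := by
  induction i with
  | zero => rfl
  | succ i ih => rw [prefixList_succ σ hi, List.length_append, ih (by lia), List.length_singleton]

namespace Rule

variable (R : Rule n) (σ : Ord n)

lemma run_zero : R.run σ 0 = ∅ := rfl

lemma run_succ {i : ℕ} (hi : i < numEdges n) :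
    R.run σ (i + 1) = R.step i (R.run σ i) (σ ⟨i, hi⟩).1 := by
  simp [run, play, prefixList_succ σ hi, List.zipIdx_append, length_prefixList σ hi.le]

lemma run_succ_of_le {i : ℕ} (hi : numEdges n ≤ i) : R.run σ (i + 1) = R.run σ i := by
  rw [run, run, prefixList_succ_of_le σ hi]

lemma buy_strategy (i : ℕ) : buy R.strategy σ i = R.run σ i := by
  induction i with
  | zero => rfl
  | succ i ih =>
    rcases lt_or_ge i (numEdges n) with hi | hi
    · have hst : R.strategy (prefixList σ (i + 1)) ↔ R i (R.run σ i) (σ ⟨i, hi⟩).1 := by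
        simp [strategy, prefixList_succ σ hi, length_prefixList σ hi.le, run]
      rw [buy, dif_pos hi, ih, run_succ R σ hi, step]
      congr 1
      exact propext hst
    · simp [buy, hi.not_gt, ih, run_succ_of_le R σ hi]

lemma run_mono : Monotone (R.run σ) := by
  refine monotone_nat_of_le_succ fun i => ?_
  rcases lt_or_ge i (numEdges n) with hi | hi
  · rw [run_succ R σ hi, step]
    split_ifs
    exacts [subset_insert _ _, le_rfl]
  · rw [run_succ_of_le R σ hi]

variable {R σ}

lemma run_subset_procEdges (i : ℕ) : R.run σ i ⊆ procEdges σ i := by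
  induction i with
  | zero => simp [run_zero]
  | succ i ih =>
    rcases lt_or_ge i (numEdges n) with hi | hi
    · rw [run_succ R σ hi, procEdges_succ σ hi, step]
      split_ifs
      exacts [insert_subset_insert _ ih, ih.trans (subset_insert _ _)]
    · rwa [run_succ_of_le R σ hi, procEdges_succ_of_le σ hi]

lemma notMem_run {i : ℕ} {j : Fin (numEdges n)} (hij : i ≤ j) : (σ j).1 ∉ R.run σ i :=
  fun h => notMem_procEdges σ hij (run_subset_procEdges i h)

lemma not_isDiag_of_mem_run {i : ℕ} {e : Sym2 (Fin n)} (he : e ∈ R.run σ i) : ¬ e.IsDiag := by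
  obtain ⟨j, -, rfl⟩ := (mem_procEdges σ).1 (run_subset_procEdges i he)
  exact (σ j).2

variable (R σ)

lemma run_swap {i j : Fin (numEdges n)} (hij : i ≤ j) {l : ℕ} (hl : l ≤ i) :
    R.run ((Equiv.swap i j).trans σ) l = R.run σ l := by
  induction l with
  | zero => rfl
  | succ l ih =>
    have hlN : l < numEdges n := by lia
    rw [run_succ _ _ hlN, run_succ _ _ hlN, ih (by lia), Equiv.trans_apply,
      Equiv.swap_apply_of_ne_of_ne]
    all_goals exact Fin.ne_of_val_ne (by simp; lia)

variable {R}

lemma expect_run_succ_le {i : ℕ} (hi : i < numEdges n) (Φ Ψ : Finset (Sym2 (Fin n)) → ℝ)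
    (h : ∀ σ : Ord n, ∑ j ∈ Ici ⟨i, hi⟩, Φ (R.step i (R.run σ i) (σ j).1) ≤
      ((numEdges n : ℝ) - i) * Ψ (R.run σ i)) :
    𝔼 σ, Φ (R.run σ (i + 1)) ≤ 𝔼 σ, Ψ (R.run σ i) := by
  have hpos : (0 : ℝ) < (numEdges n : ℝ) - i := sub_pos.2 (by exact_mod_cast hi)
  refine le_of_mul_le_mul_left ?_ hpos
  simp_rw [run_succ R _ hi]
  calc ((numEdges n : ℝ) - i) * 𝔼 σ, Φ (R.step i (R.run σ i) (σ ⟨i, hi⟩).1)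
      = 𝔼 σ, ∑ j ∈ Ici ⟨i, hi⟩, Φ (R.step i (R.run σ i) (σ j).1) :=
        expect_next_edge ⟨i, hi⟩ (fun σ (e : EdgeType n) => Φ (R.step i (R.run σ i) e.1))
          fun σ j hij => by rw [run_swap R σ hij le_rfl]
    _ ≤ 𝔼 σ, ((numEdges n : ℝ) - i) * Ψ (R.run σ i) := expect_le_expect fun σ _ => h σ
    _ = ((numEdges n : ℝ) - i) * 𝔼 σ, Ψ (R.run σ i) := (mul_expect _ _ _).symm

end Rule

end Rules

section Degrees

variable {n : ℕ} {B C : Finset (Sym2 (Fin n))} {e : Sym2 (Fin n)}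

lemma deg_mono (h : B ⊆ C) (v : Fin n) : deg B v ≤ deg C v :=
  card_le_card (filter_subset_filter _ h)

lemma deg_insert (he : e ∉ B) (v : Fin n) :
    deg (insert e B) v = deg B v + if v ∈ e then 1 else 0 := by
  rw [deg, filter_insert, apply_ite card, card_insert_of_notMem (by simp [he])]
  split_ifs <;> rfl

lemma sum_deg (hB : ∀ e ∈ B, ¬ e.IsDiag) : ∑ v, deg B v = 2 * #B := by
  calc ∑ v, deg B v = ∑ e ∈ B, #{v | v ∈ e} := sum_card_bipartiteAbove_eq_sum_card_bipartiteBelow _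
    _ = ∑ e ∈ B, 2 := sum_congr rfl fun e he => by
        rw [← Sym2.card_toFinset_of_not_isDiag e (hB e he)]; congr 1; ext v; simp
    _ = 2 * #B := by rw [sum_const, smul_eq_mul, mul_comm]

lemma sum_comp_deg_insert {M : Type*} [AddCommMonoid M] (f : ℕ → M) (he : e ∉ B) :
    ∑ v, f (deg (insert e B) v) + ∑ v ∈ e.toFinset, f (deg B v) =
      ∑ v, f (deg B v) + ∑ v ∈ e.toFinset, f (deg B v + 1) := by
  have hcompl : ∑ v ∈ e.toFinsetᶜ, f (deg (insert e B) v) = ∑ v ∈ e.toFinsetᶜ, f (deg B v) :=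
    sum_congr rfl fun v hv => by simp_all [deg_insert he]
  have hmem : ∑ v ∈ e.toFinset, f (deg (insert e B) v) = ∑ v ∈ e.toFinset, f (deg B v + 1) :=
    sum_congr rfl fun v hv => by simp_all [deg_insert he]
  rw [← sum_add_sum_compl e.toFinset, ← sum_add_sum_compl e.toFinset fun v => f (deg B v), hmem,
    hcompl]
  abel

/-- The total excess over `k` of the degrees in the graph `B`: by `two_mul_card_le` it measures how
many edges are wasted on the way to minimum degree `k`. -/
def excess (k : ℕ) (B : Finset (Sym2 (Fin n))) : ℕ := ∑ v, (deg B v - k)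

/-- The total deficiency below `t` of the degrees in the graph `B`; for `t = 1` this is the number
of isolated vertices. -/
def deficiency (t : ℕ) (B : Finset (Sym2 (Fin n))) : ℕ := ∑ v, (t - deg B v)

/-- The set of vertices of degree less than `t` in the graph `B`. -/
def deficient (t : ℕ) (B : Finset (Sym2 (Fin n))) : Finset (Fin n) := {v | deg B v < t}

lemma mem_deficient {t : ℕ} {v : Fin n} : v ∈ deficient t B ↔ deg B v < t := by
  simp [deficient]

lemma deficient_anti (t : ℕ) (h : B ⊆ C) : deficient t C ⊆ deficient t B := fun v hv =>
  mem_deficient.2 ((deg_mono h v).trans_lt (mem_deficient.1 hv))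

lemma two_mul_card_le (k : ℕ) (hB : ∀ e ∈ B, ¬ e.IsDiag) : 2 * #B ≤ k * n + excess k B := by
  calc 2 * #B = ∑ v, deg B v := (sum_deg hB).symm
    _ ≤ ∑ v : Fin n, (k + (deg B v - k)) := sum_le_sum fun v _ => by lia
    _ = k * n + excess k B := by simp [excess, sum_add_distrib, mul_comm]

lemma deficiency_le_mul_card (t : ℕ) (B : Finset (Sym2 (Fin n))) :
    deficiency t B ≤ t * #(deficient t B) := by
  calc deficiency t B = ∑ v ∈ deficient t B, (t - deg B v) :=
        (sum_subset (subset_univ _) fun v _ hv => by rw [mem_deficient] at hv; lia).symm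
    _ ≤ ∑ _v ∈ deficient t B, t := sum_le_sum fun _ _ => Nat.sub_le _ _
    _ = t * #(deficient t B) := by rw [sum_const, smul_eq_mul, mul_comm]

lemma excess_insert (k : ℕ) (he : e ∉ B) :
    excess k (insert e B) = excess k B + #{v ∈ e.toFinset | k ≤ deg B v} := by
  have h : ∑ v ∈ e.toFinset, (deg B v + 1 - k) =
      ∑ v ∈ e.toFinset, (deg B v - k) + #{v ∈ e.toFinset | k ≤ deg B v} := by
    rw [card_filter, ← sum_add_distrib]
    exact sum_congr rfl fun v _ => by split_ifs <;> lia
  have := sum_comp_deg_insert (fun x => x - k) he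
  simp only [excess] at *
  lia

lemma deficiency_insert (t : ℕ) (he : e ∉ B) :
    deficiency t (insert e B) + #{v ∈ e.toFinset | deg B v < t} = deficiency t B := by
  have h : ∑ v ∈ e.toFinset, (t - (deg B v + 1)) + #{v ∈ e.toFinset | deg B v < t} =
      ∑ v ∈ e.toFinset, (t - deg B v) := by
    rw [card_filter, ← sum_add_distrib]
    exact sum_congr rfl fun v _ => by split_ifs <;> lia
  have := sum_comp_deg_insert (fun x => t - x) he
  simp only [deficiency] at *
  lia

lemma deficiency_anti (t : ℕ) (h : B ⊆ C) : deficiency t C ≤ deficiency t B :=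
  sum_le_sum fun v _ => Nat.sub_le_sub_left (deg_mono h v) t

lemma excess_add_deficiency_insert_le {k t : ℕ} (htk : t ≤ k) (he : e ∉ B)
    (h : (∃ v ∈ e, deg B v < t) ∨ ∀ v ∈ e, deg B v < k) :
    excess k (insert e B) + deficiency t (insert e B) ≤ excess k B + deficiency t B := by
  suffices #{v ∈ e.toFinset | k ≤ deg B v} ≤ #{v ∈ e.toFinset | deg B v < t} by
    have := excess_insert k he
    have := deficiency_insert t he
    lia
  rcases h with ⟨v, hv, hvt⟩ | h
  · have hpos : 0 < #{v ∈ e.toFinset | deg B v < t} :=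
      card_pos.2 ⟨v, mem_filter.2 ⟨Sym2.mem_toFinset.2 hv, hvt⟩⟩
    have hsum : #{v ∈ e.toFinset | deg B v < t} + #{v ∈ e.toFinset | k ≤ deg B v} ≤ 2 := by
      rw [← card_union_of_disjoint (disjoint_filter.2 fun v _ _ => by lia)]
      refine (card_le_card (union_subset (filter_subset _ _) (filter_subset _ _))).trans ?_
      rw [Sym2.card_toFinset]
      split_ifs <;> lia
    lia
  · rw [filter_false_of_mem fun v hv => (h v (Sym2.mem_toFinset.1 hv)).not_ge, card_empty]
    exact Nat.zero_le _

end Degrees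

namespace Rule

variable {n : ℕ} {R : Rule n} {σ : Ord n}

lemma excess_add_deficiency_run_le {k t s : ℕ} (htk : t ≤ k) {i : ℕ} (hsi : s ≤ i)
    (h : ∀ j, s ≤ j → j < i → ∀ B e, R j B e →
      (∃ v ∈ e, deg B v < t) ∨ ∀ v ∈ e, deg B v < k) :
    excess k (R.run σ i) + deficiency t (R.run σ i) ≤
      excess k (R.run σ s) + deficiency t (R.run σ s) := by
  induction i, hsi using Nat.le_induction with
  | base => exact le_rfl
  | succ i hsi ih =>
    refine le_trans ?_ (ih fun j hsj hji => h j hsj (by lia))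
    rcases lt_or_ge i (numEdges n) with hi | hi
    · rw [run_succ R σ hi, step]
      split_ifs with hR
      · exact excess_add_deficiency_insert_le htk (notMem_run (j := ⟨i, hi⟩) le_rfl)
          (h i hsi i.lt_succ_self _ _ hR)
      · exact le_rfl
    · rw [run_succ_of_le R σ hi]

lemma deg_run_pos_of_deg_procEdges_pos (hR : ∀ i B e, (∃ v ∈ e, deg B v = 0) → R i B e) {i : ℕ}
    {v : Fin n} (hv : 0 < deg (procEdges σ i) v) : 0 < deg (R.run σ i) v := by
  induction i with
  | zero => simp [deg, procEdges] at hv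
  | succ i ih =>
    rcases lt_or_ge i (numEdges n) with hi | hi
    · rw [procEdges_succ σ hi, deg_insert (notMem_procEdges σ le_rfl)] at hv
      by_contra! h0
      have h0' : deg (R.run σ i) v = 0 := by
        have := deg_mono (run_mono R σ i.le_succ) v
        lia
      have hve : v ∈ (σ ⟨i, hi⟩).1 := by
        by_contra hve
        simp only [hve, if_false] at hv
        exact (ih (by lia)).ne' h0'
      rw [run_succ R σ hi, step, if_pos (hR i _ _ ⟨v, hve, h0'⟩),
        deg_insert (notMem_run le_rfl), if_pos hve] at h0
      lia
    · rw [procEdges_succ_of_le σ hi] at hv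
      rw [run_succ_of_le R σ hi]
      exact ih hv

lemma deg_procEdges_add_le_deg_run {k s : ℕ}
    (hR : ∀ i, s ≤ i → ∀ B e, (∃ v ∈ e, deg B v < k) → R i B e) {i : ℕ} (hsi : s ≤ i) {v : Fin n}
    (hv : deg (R.run σ i) v < k) :
    deg (procEdges σ i) v + deg (R.run σ s) v ≤ deg (procEdges σ s) v + deg (R.run σ i) v := by
  induction i, hsi using Nat.le_induction with
  | base => exact le_rfl
  | succ i hsi ih =>
    have hvi : deg (R.run σ i) v < k := (deg_mono (run_mono R σ i.le_succ) v).trans_lt hv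
    have ih := ih hvi
    rcases lt_or_ge i (numEdges n) with hi | hi
    · rw [procEdges_succ σ hi, run_succ R σ hi, step, deg_insert (notMem_procEdges σ le_rfl)]
      by_cases hve : v ∈ (σ ⟨i, hi⟩).1
      · rw [if_pos (hR i hsi _ _ ⟨v, hve, hvi⟩), deg_insert (notMem_run le_rfl)]
        lia
      · have := deg_mono (run_mono R σ i.le_succ) v
        rw [run_succ R σ hi, step] at this
        simp only [hve, if_false]
        lia
    · rwa [procEdges_succ_of_le σ hi, run_succ_of_le R σ hi]

/-- A vertex of degree at least `k` in `G_t` either is isolated in `G_s`, and then Builder buys the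
first `k` edges at it, or it has positive degree in `B_s`, and `k - 1` later edges suffice. -/
lemma le_deg_run {k s m t : ℕ} (hiso : ∀ i B e, (∃ v ∈ e, deg B v = 0) → R i B e)
    (hlate : ∀ i, s ≤ i → ∀ B e, (∃ v ∈ e, deg B v < k) → R i B e) (hsm : s ≤ m) (hmt : m ≤ t)
    {v : Fin n} (ht : k ≤ deg (procEdges σ t) v)
    (hm : deg (procEdges σ s) v + k ≤ deg (procEdges σ m) v + 1) : k ≤ deg (R.run σ t) v := by
  by_contra! hv
  have hgain := deg_procEdges_add_le_deg_run hlate (hsm.trans hmt) hv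
  rcases Nat.eq_zero_or_pos (deg (procEdges σ s) v) with h0 | hpos
  · lia
  · have := deg_run_pos_of_deg_procEdges_pos hiso hpos
    have := deg_mono (procEdges_mono σ hmt) v
    lia

/-- Builder's rule: before time `M₁` she buys edges with an isolated endpoint, then until time `M₂`
also edges with both endpoints of degree less than `k`, and from then on all edges with an endpoint
of degree less than `k`. -/
def threePhase (n k M₁ M₂ : ℕ) : Rule n := fun i B e =>
  (∃ v ∈ e, deg B v = 0) ∨ (M₁ ≤ i ∧ ∀ v ∈ e, deg B v < k) ∨ (M₂ ≤ i ∧ ∃ v ∈ e, deg B v < k)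

variable {k M₁ M₂ : ℕ}

lemma two_mul_card_run_threePhase_le (hk : 1 ≤ k) (hM : M₁ ≤ M₂) {i : ℕ} (hi : M₂ ≤ i) :
    let R := threePhase n k M₁ M₂
    2 * #(R.run σ i) ≤ k * n + excess k (R.run σ M₁) + deficiency 1 (R.run σ M₁) +
      deficiency k (R.run σ M₂) := by
  intro R
  have hphase2 : excess k (R.run σ M₂) + deficiency 1 (R.run σ M₂) ≤
      excess k (R.run σ M₁) + deficiency 1 (R.run σ M₁) := by
    refine excess_add_deficiency_run_le hk hM fun j _ hj B e => ?_
    rintro (⟨v, hv, h0⟩ | ⟨-, h⟩ | ⟨h, -⟩)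
    exacts [.inl ⟨v, hv, by lia⟩, .inr h, by lia]
  have hphase3 : excess k (R.run σ i) + deficiency k (R.run σ i) ≤
      excess k (R.run σ M₂) + deficiency k (R.run σ M₂) := by
    refine excess_add_deficiency_run_le le_rfl hi fun j _ _ B e => ?_
    rintro (⟨v, hv, h0⟩ | ⟨-, h⟩ | ⟨-, h⟩)
    exacts [.inl ⟨v, hv, by lia⟩, .inr h, .inl h]
  have := two_mul_card_le k fun e he => not_isDiag_of_mem_run (R := R) (σ := σ) (i := i) he
  lia

lemma le_deg_run_threePhase {m t : ℕ} (hMm : M₂ ≤ m) (hmt : m ≤ t) {v : Fin n}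
    (ht : k ≤ deg (procEdges σ t) v)
    (hm : deg (procEdges σ M₂) v + k ≤ deg (procEdges σ m) v + 1) :
    k ≤ deg ((threePhase n k M₁ M₂).run σ t) v :=
  le_deg_run (fun _ _ _ h => .inl h) (fun _ hi _ _ h => .inr (.inr ⟨hi, h⟩)) hMm hmt ht hm

end Rule

section DeficientVertices

variable {n : ℕ}

lemma card_filter_mem_sym2 (σ : Ord n) (D : Finset (Fin n)) :
    #{j | (σ j).1 ∈ D.sym2} = (#D).choose 2 := by
  rw [← Sym2.card_image_offDiag, ← Sym2.filter_image_mk_not_isDiag, ← sym2_eq_image,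
    ← card_image_of_injective _ (Subtype.val_injective.comp σ.injective)]
  congr 1
  ext e
  simp only [mem_image, mem_filter, mem_univ, true_and, Function.comp_apply]
  constructor
  · rintro ⟨j, hj, rfl⟩
    exact ⟨hj, (σ j).2⟩
  · exact fun h => ⟨σ.symm ⟨e, h.2⟩, by simpa using h.1, by simp⟩

lemma choose_two_card_le (σ : Ord n) (D : Finset (Fin n)) (i : Fin (numEdges n)) :
    (#D).choose 2 ≤ #{j ∈ Ici i | (σ j).1 ∈ D.sym2} + i := by
  rw [← card_filter_mem_sym2 σ, ← Fin.card_Iio i]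
  refine (card_le_card fun j hj => ?_).trans (card_union_le _ _)
  rcases le_or_gt i j with hij | hij <;> simp_all

lemma deficiency_le_mul (t : ℕ) (B : Finset (Sym2 (Fin n))) : deficiency t B ≤ t * n :=
  (deficiency_le_mul_card t B).trans
    (Nat.mul_le_mul_left t ((card_le_univ _).trans_eq (Fintype.card_fin n)))

namespace Rule

variable {R : Rule n} {σ : Ord n} {t i : ℕ}

lemma deficiency_step_add_le (hR : ∀ B e, (∀ v ∈ e, deg B v < t) → R i B e)
    {j : Fin (numEdges n)} (hij : i ≤ j) :
    deficiency t (R.step i (R.run σ i) (σ j).1) +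
      (if (σ j).1 ∈ (deficient t (R.run σ i)).sym2 then 1 else 0) ≤
        deficiency t (R.run σ i) := by
  have hnew := notMem_run (R := R) (σ := σ) hij
  by_cases he : (σ j).1 ∈ (deficient t (R.run σ i)).sym2
  · simp only [mem_sym2_iff, mem_deficient] at he
    have hpos : 0 < #{v ∈ (σ j).1.toFinset | deg (R.run σ i) v < t} := by
      rw [filter_true_of_mem fun v hv => he v (Sym2.mem_toFinset.1 hv),
        Sym2.card_toFinset_of_not_isDiag _ (σ j).2]
      exact two_pos
    rw [step, if_pos (hR _ _ he), ← deficiency_insert t hnew]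
    split_ifs <;> lia
  · rw [if_neg he, add_zero]
    exact deficiency_anti t (by rw [step]; split_ifs; exacts [subset_insert _ _, le_rfl])

lemma expect_deficiency_run_succ_le {q : ℕ} {η : ℝ} (hi : i < numEdges n) (hη0 : 0 ≤ η)
    (hη : η * numEdges n ≤ (q.choose 2 : ℝ) - i)
    (hR : ∀ B e, (∀ v ∈ e, deg B v < t) → R i B e) :
    𝔼 σ, (deficiency t (R.run σ (i + 1)) : ℝ) ≤
      𝔼 σ, (deficiency t (R.run σ i) : ℝ) - η * Pr fun σ => q ≤ #(deficient t (R.run σ i)) := by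
  rw [Pr_eq_expect, mul_expect, ← expect_sub_distrib]
  refine expect_run_succ_le hi (fun B => (deficiency t B : ℝ))
    (fun B => deficiency t B - η * if q ≤ #(deficient t B) then 1 else 0) fun σ => ?_
  set B := R.run σ i
  have hsum : (∑ j ∈ Ici ⟨i, hi⟩, (deficiency t (R.step i B (σ j).1) : ℝ)) +
      #{j ∈ Ici ⟨i, hi⟩ | (σ j).1 ∈ (deficient t B).sym2} ≤
        ((numEdges n : ℝ) - i) * deficiency t B := by
    rw [← Nat.cast_sub hi.le, ← Fin.card_Ici (⟨i, hi⟩ : Fin (numEdges n)), card_filter]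
    exact_mod_cast sum_add_distrib.symm.trans_le
      (sum_le_card_nsmul _ _ _ fun j hj =>
        deficiency_step_add_le hR (Fin.le_def.1 (mem_Ici.1 hj)))
  have hcount : ((numEdges n : ℝ) - i) * (η * if q ≤ #(deficient t B) then 1 else 0) ≤
      #{j ∈ Ici ⟨i, hi⟩ | (σ j).1 ∈ (deficient t B).sym2} := by
    split_ifs with hq
    · have hchoose : (q.choose 2 : ℝ) ≤
          #{j ∈ Ici ⟨i, hi⟩ | (σ j).1 ∈ (deficient t B).sym2} + i := by
        exact_mod_cast (Nat.choose_le_choose 2 hq).trans (choose_two_card_le σ _ ⟨i, hi⟩)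
      have : 0 ≤ (i : ℝ) * η := by positivity
      linarith
    · simp
  linarith

/-- As long as `q` vertices are deficient, the deficiency drops by at least `η` per step on
average; but it is at most `t * n` to begin with. -/
lemma mul_Pr_le_card_deficient_le {s M q : ℕ} {η : ℝ} (hsM : s + M ≤ numEdges n) (hη0 : 0 ≤ η)
    (hη : η * numEdges n ≤ (q.choose 2 : ℝ) - (s + M : ℕ))
    (hR : ∀ i B e, s ≤ i → i < s + M → (∀ v ∈ e, deg B v < t) → R i B e) :
    M * η * Pr (fun σ => q ≤ #(deficient t (R.run σ (s + M)))) ≤ t * n := by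
  set P := Pr (fun σ => q ≤ #(deficient t (R.run σ (s + M))))
  have hdecay : ∀ l ≤ M, 𝔼 σ, (deficiency t (R.run σ (s + l)) : ℝ) ≤ t * n - l * η * P := by
    intro l hl
    induction l with
    | zero =>
      have : 𝔼 σ, (deficiency t (R.run σ s) : ℝ) ≤ t * n :=
        expect_le univ_nonempty fun σ _ => by exact_mod_cast deficiency_le_mul t (R.run σ s)
      simpa
    | succ l ih =>
      have hstep := expect_deficiency_run_succ_le (R := R) (t := t) (i := s + l) (by lia) hη0
        (hη.trans (sub_le_sub_left (by exact_mod_cast (by lia : s + l ≤ s + M)) _))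
        fun B e => hR (s + l) B e (by lia) (by lia)
      have hP : P ≤ Pr fun σ => q ≤ #(deficient t (R.run σ (s + l))) := Pr_mono fun σ hσ =>
        hσ.trans (card_le_card (deficient_anti t (run_mono R σ (by lia))))
      have := mul_le_mul_of_nonneg_left hP hη0
      rw [← add_assoc]
      push_cast
      linarith [ih (by lia)]
  have hnonneg : 0 ≤ 𝔼 σ, (deficiency t (R.run σ (s + M)) : ℝ) :=
    expect_nonneg fun σ _ => by positivity
  linarith [hdecay M le_rfl]

end Rule

end DeficientVertices

section Chebyshev

variable {n : ℕ}

lemma sq_max_add_le (x y : ℝ) :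
    max (x + y) 0 ^ 2 ≤ max x 0 ^ 2 + 2 * max x 0 * y + y ^ 2 := by
  rcases le_total 0 x with hx | hx <;> rcases le_total 0 (x + y) with hxy | hxy <;>
    simp only [hx, hxy, max_eq_left, max_eq_right] <;> nlinarith [sq_nonneg (x + y), sq_nonneg y]

namespace Rule

variable {R : Rule n} {Φ : Finset (Sym2 (Fin n)) → ℝ} {a c : ℝ} {M : ℕ}

lemma expect_sq_max_run_le (hM : M ≤ numEdges n) (h0 : Φ ∅ ≤ a)
    (hc : ∀ i < M, ∀ (σ : Ord n) (j : Fin (numEdges n)), i ≤ j →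
      |Φ (R.step i (R.run σ i) (σ j).1) - Φ (R.run σ i)| ≤ c)
    (hdrift : ∀ i < M, ∀ (hi : i < numEdges n) (σ : Ord n),
      ∑ j ∈ Ici ⟨i, hi⟩, (Φ (R.step i (R.run σ i) (σ j).1) - Φ (R.run σ i)) ≤ 0) :
    𝔼 σ, max (Φ (R.run σ M) - a) 0 ^ 2 ≤ M * c ^ 2 := by
  induction M with
  | zero => simp [run_zero, h0]
  | succ i ih =>
    refine (expect_run_succ_le hM (fun B => max (Φ B - a) 0 ^ 2)
      (fun B => max (Φ B - a) 0 ^ 2 + c ^ 2) fun σ => ?_).trans ?_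
    · set B := R.run σ i
      have hstep : ∀ j ∈ Ici (⟨i, hM⟩ : Fin (numEdges n)),
          max (Φ (R.step i B (σ j).1) - a) 0 ^ 2 ≤ max (Φ B - a) 0 ^ 2 + c ^ 2 +
            2 * max (Φ B - a) 0 * (Φ (R.step i B (σ j).1) - Φ B) := fun j hj => by
        have hsq := sq_le_sq' (abs_le.1 (hc i i.lt_succ_self σ j (Fin.le_def.1 (mem_Ici.1 hj)))).1
          (abs_le.1 (hc i i.lt_succ_self σ j (Fin.le_def.1 (mem_Ici.1 hj)))).2
        have := sq_max_add_le (Φ B - a) (Φ (R.step i B (σ j).1) - Φ B)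
        rw [show Φ B - a + (Φ (R.step i B (σ j).1) - Φ B) = Φ (R.step i B (σ j).1) - a by ring]
          at this
        linarith
      refine (sum_le_sum hstep).trans ?_
      rw [sum_add_distrib, sum_const, nsmul_eq_mul, Fin.card_Ici, Nat.cast_sub (by lia),
        ← mul_sum]
      have := mul_nonpos_of_nonneg_of_nonpos
        (by positivity : 0 ≤ 2 * max (Φ B - a) 0) (hdrift i i.lt_succ_self hM σ)
      linarith
    · rw [expect_add_distrib, Fintype.expect_const]
      have := ih (by lia) (fun l hl => hc l (by lia)) (fun l hl => hdrift l (by lia))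
      push_cast
      linarith

/-- Chebyshev's inequality for a supermartingale with increments bounded by `c`: only the upward
deviations have a second moment of order `M * c ^ 2`. -/
lemma Pr_add_le_run_le (hM : M ≤ numEdges n) (h0 : Φ ∅ ≤ a)
    (hc : ∀ i < M, ∀ (σ : Ord n) (j : Fin (numEdges n)), i ≤ j →
      |Φ (R.step i (R.run σ i) (σ j).1) - Φ (R.run σ i)| ≤ c)
    (hdrift : ∀ i < M, ∀ (hi : i < numEdges n) (σ : Ord n),
      ∑ j ∈ Ici ⟨i, hi⟩, (Φ (R.step i (R.run σ i) (σ j).1) - Φ (R.run σ i)) ≤ 0)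
    {b : ℝ} (hb : 0 < b) :
    Pr (fun σ => a + b ≤ Φ (R.run σ M)) ≤ M * c ^ 2 / b ^ 2 := by
  refine (Pr_le_expect_div (f := fun σ => max (Φ (R.run σ M) - a) 0 ^ 2) (fun σ => by positivity)
    (by positivity : 0 < b ^ 2) fun σ hσ => ?_).trans ?_
  · exact pow_le_pow_left₀ hb.le (le_max_of_le_left (by linarith)) 2
  · gcongr
    exact expect_sq_max_run_le hM h0 hc hdrift

end Rule

end Chebyshev

section Potential

variable {n : ℕ} {B : Finset (Sym2 (Fin n))}

/-- The sum over the vertices of `2 ^ d`, where `d` is the degree truncated at `k`. -/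
def weight (k : ℕ) (B : Finset (Sym2 (Fin n))) : ℕ := ∑ v, 2 ^ min (deg B v) k

/-- The potential that controls the excess in the first phase: a supermartingale as long as Builder
buys exactly the edges with an isolated endpoint. -/
noncomputable def potential (k : ℕ) (B : Finset (Sym2 (Fin n))) : ℝ :=
  2 ^ k / 2 * n * excess k B + deficiency 1 B * weight k B

/-- The change of the potential when `v` is joined to an isolated vertex; only half of it if `v` is
isolated as well, so that each of the two isolated endpoints contributes one half. -/
noncomputable def potentialGain (k : ℕ) (B : Finset (Sym2 (Fin n))) (v : Fin n) : ℝ :=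
  2 ^ k / 2 * n * (if k ≤ deg B v then 1 else 0) +
    (deficiency 1 B - 1) * (1 + if deg B v < k then 2 ^ deg B v else 0) - weight k B -
    deficiency 1 B * (if deg B v = 0 then 1 else 0)

lemma deficiency_one (B : Finset (Sym2 (Fin n))) :
    deficiency 1 B = ∑ v, if deg B v = 0 then 1 else 0 :=
  sum_congr rfl fun v _ => by split_ifs <;> lia

lemma weight_eq (k : ℕ) (B : Finset (Sym2 (Fin n))) :
    weight k B = ∑ v, (if deg B v < k then 2 ^ deg B v else 0) +
      2 ^ k * ∑ v, if k ≤ deg B v then 1 else 0 := by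
  rw [mul_sum, ← sum_add_distrib]
  refine sum_congr rfl fun v _ => ?_
  rcases lt_or_ge (deg B v) k with h | h
  · simp [h, h.le, h.not_ge]
  · simp [h, h.not_gt]

lemma weight_insert (k : ℕ) {e : Sym2 (Fin n)} (he : e ∉ B) :
    weight k (insert e B) =
      weight k B + ∑ v ∈ e.toFinset, if deg B v < k then 2 ^ deg B v else 0 := by
  have h : ∑ v ∈ e.toFinset, 2 ^ min (deg B v + 1) k = ∑ v ∈ e.toFinset, 2 ^ min (deg B v) k +
      ∑ v ∈ e.toFinset, if deg B v < k then 2 ^ deg B v else 0 := by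
    rw [← sum_add_distrib]
    refine sum_congr rfl fun v _ => ?_
    rcases lt_or_ge (deg B v) k with hv | hv
    · simp [hv, hv.le, Nat.succ_le_of_lt hv, pow_succ, mul_two]
    · simp [hv, hv.not_gt, hv.trans (Nat.le_succ _)]
  have := sum_comp_deg_insert (fun x => 2 ^ min x k) he
  simp only [weight] at *
  lia

lemma weight_le (k : ℕ) (B : Finset (Sym2 (Fin n))) : weight k B ≤ n * 2 ^ k := by
  calc weight k B ≤ ∑ _v : Fin n, 2 ^ k :=
        sum_le_sum fun v _ => Nat.pow_le_pow_right two_pos (min_le_right _ _)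
    _ = n * 2 ^ k := by simp

lemma potential_insert_sub {k : ℕ} (hk : 1 ≤ k) {u v : Fin n} (huv : u ≠ v) (he : s(u, v) ∉ B)
    (h0 : ∃ w ∈ s(u, v), deg B w = 0) :
    potential k (insert s(u, v) B) - potential k B =
      (if deg B u = 0 then 1 else 0) * potentialGain k B v +
      (if deg B v = 0 then 1 else 0) * potentialGain k B u := by
  have hexc := excess_insert k he
  have hdfc := deficiency_insert 1 he
  have hwt := weight_insert k he
  simp only [card_filter, Sym2.toFinset_mk_eq, sum_pair huv, Nat.lt_one_iff] at hexc hdfc hwt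
  have hdfc' := congrArg (Nat.cast (R := ℝ)) hdfc
  rw [potential, potential, hexc, hwt, ← sub_eq_zero]
  push_cast at hdfc' ⊢
  rw [← eq_sub_iff_add_eq] at hdfc'
  rw [hdfc']
  simp only [potentialGain]
  simp only [Sym2.mem_iff, exists_eq_or_imp, exists_eq_left] at h0
  have hk0 : ¬ k ≤ 0 := by lia
  have hk0' : 0 < k := hk
  by_cases hu : deg B u = 0 <;> by_cases hv : deg B v = 0
  · simp only [hu, hv, hk0, hk0', if_true, if_false, pow_zero]; ring
  · simp only [hu, hv, hk0, hk0', if_true, if_false, pow_zero]; ring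
  · simp only [hu, hv, hk0, hk0', if_true, if_false, pow_zero]; ring
  · exact absurd h0 (by simp [hu, hv])

lemma potentialGain_of_deg_eq_zero {k : ℕ} (hk : 1 ≤ k) {v : Fin n} (hv : deg B v = 0) :
    potentialGain k B v = deficiency 1 B - weight k B - 2 := by
  have hk0 : 0 < k := hk
  simp only [potentialGain, hv, hk0, hk0.not_ge, if_true, if_false, mul_zero, pow_zero, zero_add,
    mul_one]
  ring

lemma sum_potentialGain_le {k : ℕ} (hk : 1 ≤ k) (hn : 2 ≤ n) (B : Finset (Sym2 (Fin n))) :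
    ∑ v, potentialGain k B v ≤ deficiency 1 B - weight k B - 2 := by
  set I : ℝ := (deficiency 1 B : ℝ) with hI
  set X : ℝ := ∑ v, (if deg B v < k then 2 ^ deg B v else 0) with hX
  set F : ℝ := ∑ v, (if k ≤ deg B v then 1 else 0) with hF
  have hI' : I = ∑ v, (if deg B v = 0 then 1 else 0) := by simp [hI, deficiency_one]
  have hS : (weight k B : ℝ) = X + 2 ^ k * F := by rw [weight_eq]; push_cast; rfl
  have hIX : I ≤ X := by
    rw [hI', hX]
    refine sum_le_sum fun v _ => ?_
    split_ifs with h0 hk' <;> first | positivity | simp_all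
  have hIn : I ≤ n := Nat.cast_le.2 ((deficiency_le_mul 1 B).trans_eq (one_mul n))
  have hn' : (2 : ℝ) ≤ n := by exact_mod_cast hn
  have hF0 : 0 ≤ 2 ^ k / 2 * F := by positivity
  have hsum : ∑ v, potentialGain k B v =
      2 ^ k / 2 * n * F + (I - 1) * (n + X) - n * (X + 2 ^ k * F) - I * I := by
    simp only [potentialGain, sum_sub_distrib, sum_add_distrib, ← mul_sum, sum_const, card_univ,
      Fintype.card_fin, nsmul_eq_mul, mul_one, ← hI, ← hX, ← hF, ← hI', hS]
    ring
  rw [hsum, hS]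
  nlinarith [mul_nonneg hF0 (sub_nonneg.2 hn'), mul_nonneg (sub_nonneg.2 hIn) (sub_nonneg.2 hIX)]

lemma abs_potentialGain_le (k : ℕ) (hn : 1 ≤ n) (B : Finset (Sym2 (Fin n))) (v : Fin n) :
    |potentialGain k B v| ≤ 4 * 2 ^ k * n := by
  have hI : (deficiency 1 B : ℝ) ≤ n :=
    Nat.cast_le.2 ((deficiency_le_mul 1 B).trans_eq (one_mul n))
  have hS : (weight k B : ℝ) ≤ n * 2 ^ k := by exact_mod_cast weight_le k B
  have hn' : (1 : ℝ) ≤ n := by exact_mod_cast hn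
  have hk : (1 : ℝ) ≤ 2 ^ k := one_le_pow₀ one_le_two
  have hnk : (n : ℝ) ≤ n * 2 ^ k := le_mul_of_one_le_right (by positivity) hk
  have hkn : (2 : ℝ) ^ k ≤ n * 2 ^ k := le_mul_of_one_le_left (by positivity) hn'
  have hx0 : (0 : ℝ) ≤ if deg B v < k then 2 ^ deg B v else 0 := by positivity
  have hx : (if deg B v < k then (2 : ℝ) ^ deg B v else 0) ≤ 2 ^ k := by
    split_ifs with h
    exacts [pow_le_pow_right₀ one_le_two h.le, by positivity]
  rw [potentialGain, abs_le]
  constructor <;> split_ifs at * <;>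
    nlinarith [Nat.cast_nonneg (α := ℝ) (deficiency 1 B), Nat.cast_nonneg (α := ℝ) (weight k B)]

lemma two_mul_sum_edgeType (F : Sym2 (Fin n) → ℝ) :
    2 * ∑ e : EdgeType n, F e.1 = ∑ p ∈ univ.offDiag, F s(p.1, p.2) := by
  have hswap : ∑ p ∈ (univ : Finset (Fin n)).offDiag with ¬ p.1 < p.2, F s(p.1, p.2) =
      ∑ p ∈ (univ : Finset (Fin n)).offDiag with p.1 < p.2, F s(p.1, p.2) := by
    refine sum_equiv (Equiv.prodComm _ _) (fun p => ?_) fun p _ => by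
      rw [Equiv.prodComm_apply, Prod.fst_swap, Prod.snd_swap, Sym2.eq_swap]
    simp only [mem_filter, mem_offDiag, mem_univ, true_and, Equiv.prodComm_apply, Prod.fst_swap,
      Prod.snd_swap]
    grind
  rw [← sum_filter_add_sum_filter_not _ (fun p : Fin n × Fin n => p.1 < p.2), hswap,
    ← sum_sym2_filter_not_isDiag univ F, two_mul]
  have : ∑ e : EdgeType n, F e.1 = ∑ e ∈ univ.sym2 with ¬ e.IsDiag, F e :=
    (sum_subtype _ (fun e => by simp) F).symm
  rw [this]

lemma sum_offDiag_mul (f g : Fin n → ℝ) :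
    ∑ p ∈ univ.offDiag, f p.1 * g p.2 = (∑ v, f v) * ∑ v, g v - ∑ v, f v * g v := by
  rw [eq_sub_iff_add_eq', ← sum_diag univ fun p => f p.1 * g p.2,
    ← sum_union (disjoint_diag_offDiag _), diag_union_offDiag, sum_product, sum_mul_sum]

lemma sum_potential_insert_sub_le {k : ℕ} (hk : 1 ≤ k) (hn : 2 ≤ n) (B : Finset (Sym2 (Fin n))) :
    ∑ e : EdgeType n, (if ∃ v ∈ e.1, deg B v = 0 then
      potential k (insert e.1 B) - potential k B else 0) ≤ 0 := by
  set I : ℝ := (deficiency 1 B : ℝ) with hI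
  set f : Fin n → ℝ := fun v => if deg B v = 0 then 1 else 0 with hf
  have hI' : I = ∑ v, f v := by simp [hI, hf, deficiency_one]
  have hpair : ∀ p ∈ (univ : Finset (Fin n)).offDiag,
      (if ∃ v ∈ s(p.1, p.2), deg B v = 0 then
        potential k (insert s(p.1, p.2) B) - potential k B else 0) =
      f p.1 * potentialGain k B p.2 + potentialGain k B p.1 * f p.2 := by
    rintro ⟨u, v⟩ huv
    simp only [mem_offDiag, mem_univ, true_and] at huv
    by_cases h : ∃ w ∈ s(u, v), deg B w = 0
    · obtain ⟨w, hw, h0⟩ := h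
      rw [if_pos ⟨w, hw, h0⟩, potential_insert_sub hk huv
        (fun he => (card_pos.2 ⟨_, mem_filter.2 ⟨he, hw⟩⟩).ne' h0) ⟨w, hw, h0⟩, hf,
        mul_comm (potentialGain k B u)]
    · rw [if_neg h]
      simp only [Sym2.mem_iff, exists_eq_or_imp, exists_eq_left, not_or] at h
      simp [hf, h]
  have hsum := two_mul_sum_edgeType fun e => if ∃ v ∈ e, deg B v = 0 then
      potential k (insert e B) - potential k B else 0
  have hdiag : ∑ v, f v * potentialGain k B v = I * (I - weight k B - 2) := by
    rw [hI', sum_mul]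
    refine sum_congr rfl fun v _ => ?_
    by_cases hv : deg B v = 0
    · rw [potentialGain_of_deg_eq_zero hk hv, ← hI']
    · simp [hf, hv]
  rw [sum_congr rfl hpair, sum_add_distrib, sum_offDiag_mul, sum_offDiag_mul,
    mul_comm (∑ v, potentialGain k B v)] at hsum
  simp_rw [mul_comm (potentialGain k B _)] at hsum
  rw [hdiag, ← hI'] at hsum
  have := mul_le_mul_of_nonneg_left (sum_potentialGain_le hk hn B) (by positivity : 0 ≤ I)
  linarith

lemma abs_potential_insert_sub_le {k : ℕ} (hk : 1 ≤ k) {e : Sym2 (Fin n)} (hdiag : ¬ e.IsDiag)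
    (he : e ∉ B) (h0 : ∃ w ∈ e, deg B w = 0) :
    |potential k (insert e B) - potential k B| ≤ 8 * 2 ^ k * n := by
  induction e with | h u v
  have hu := abs_potentialGain_le k u.pos B u
  have hv := abs_potentialGain_le k v.pos B v
  rw [potential_insert_sub hk (by simpa using hdiag) he h0]
  refine (abs_add_le _ _).trans ?_
  rw [abs_mul, abs_mul]
  have hone : ∀ w, |if deg B w = 0 then (1 : ℝ) else 0| ≤ 1 := fun w => by split_ifs <;> simp
  have := mul_le_of_le_one_left (abs_nonneg (potentialGain k B v)) (hone u)
  have := mul_le_of_le_one_left (abs_nonneg (potentialGain k B u)) (hone v)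
  linarith

namespace Rule

variable {k M₁ M₂ : ℕ}

lemma potential_step_sub {i : ℕ} (hi₁ : i < M₁) (hi₂ : i < M₂) (B : Finset (Sym2 (Fin n)))
    (e : Sym2 (Fin n)) :
    potential k ((threePhase n k M₁ M₂).step i B e) - potential k B =
      if ∃ v ∈ e, deg B v = 0 then potential k (insert e B) - potential k B else 0 := by
  simp only [step, threePhase, hi₁.not_ge, hi₂.not_ge, false_and, or_false]
  split_ifs <;> simp

lemma sum_potential_step_sub_le (hk : 1 ≤ k) (hn : 2 ≤ n) {i : ℕ} (hi₁ : i < M₁) (hi₂ : i < M₂)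
    (hi : i < numEdges n) (σ : Ord n) :
    let R := threePhase n k M₁ M₂
    ∑ j ∈ Ici ⟨i, hi⟩, (potential k (R.step i (R.run σ i) (σ j).1) - potential k (R.run σ i)) ≤
      0 := by
  intro R
  simp only [R, potential_step_sub hi₁ hi₂]
  refine (sum_subset (subset_univ _) fun j _ hj => if_neg ?_).trans_le
    ((Equiv.sum_comp σ _).trans_le (sum_potential_insert_sub_le hk hn (R.run σ i)))
  rintro ⟨v, hv, h0⟩
  refine (deg_run_pos_of_deg_procEdges_pos (fun _ _ _ h => .inl h) ?_).ne' h0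
  exact card_pos.2 ⟨_, mem_filter.2
    ⟨(mem_procEdges σ).2 ⟨j, by simpa [Fin.lt_def] using hj, rfl⟩, hv⟩⟩

/-- The initial value `n ^ 2` of the potential allows an excess of only `2 * n / 2 ^ k`. -/
lemma Pr_le_excess_threePhase_le (hk : 1 ≤ k) (hn : 2 ≤ n) (hM : M₁ ≤ M₂) (hMN : M₁ ≤ numEdges n)
    {δ : ℝ} (hδ : 0 < δ) :
    Pr (fun σ => (2 / 2 ^ k + δ) * n ≤ excess k ((threePhase n k M₁ M₂).run σ M₁)) ≤
      M₁ * (8 * 2 ^ k * n) ^ 2 / (δ * n ^ 2) ^ 2 := by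
  have : (0 : ℝ) < n := by exact_mod_cast (by lia : 0 < n)
  refine (Pr_mono fun σ hσ => ?_).trans (Pr_add_le_run_le (R := threePhase n k M₁ M₂)
    (Φ := potential k) (a := (n : ℝ) ^ 2) (c := 8 * 2 ^ k * n) (b := δ * n ^ 2) hMN ?_ ?_ ?_
    (by positivity))
  · have hpow : (2 : ℝ) ≤ 2 ^ k := by simpa using pow_le_pow_right₀ one_le_two hk
    calc (n : ℝ) ^ 2 + δ * n ^ 2 ≤ n ^ 2 + 2 ^ k / 2 * (δ * n ^ 2) :=
          add_le_add_right
            (le_mul_of_one_le_left (by positivity) ((one_le_div₀ two_pos).2 hpow)) _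
      _ = 2 ^ k / 2 * n * ((2 / 2 ^ k + δ) * n) := by field_simp
      _ ≤ 2 ^ k / 2 * n * excess k ((threePhase n k M₁ M₂).run σ M₁) := by gcongr
      _ ≤ potential k ((threePhase n k M₁ M₂).run σ M₁) :=
          le_add_of_nonneg_right (by positivity)
  · simp [potential, excess, deficiency, weight, deg, sq]
  · intro i hi σ j hij
    rw [potential_step_sub hi (by lia)]
    split_ifs with h
    · exact abs_potential_insert_sub_le hk (σ j).2 (notMem_run hij) h
    · rw [abs_zero]
      positivity
  · exact fun i hi hiN σ => sum_potential_step_sub_le hk hn hi (by lia) hiN σ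

end Rule

end Potential

section Positions

variable {n : ℕ}

/-- The event that all edges of `A` and no edges of `B` are revealed at times in `P`. -/
def Separates (P : Finset (Fin (numEdges n))) (A B : Finset (EdgeType n)) (σ : Ord n) : Prop :=
  (∀ e ∈ A, σ.symm e ∈ P) ∧ ∀ e ∈ B, σ.symm e ∉ P

/-- The edges of `D` that are revealed at times in `P`. -/
def revealed (P : Finset (Fin (numEdges n))) (D : Finset (EdgeType n)) (σ : Ord n) :
    Finset (EdgeType n) := {e ∈ D | σ.symm e ∈ P}

/-- The probability that `a` given edges and no edges from `b` given ones are among `p` uniformly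
random edges out of `N`. -/
noncomputable def separationProb (N p a b : ℕ) : ℝ :=
  p.descFactorial a * (N - p).descFactorial b / N.descFactorial (a + b)

variable {P : Finset (Fin (numEdges n))} {A B D : Finset (EdgeType n)} {e e' : EdgeType n}

lemma Pr_comp_trans_swap (e e' : EdgeType n) (p : Ord n → Prop) :
    Pr (fun σ => p (σ.trans (Equiv.swap e e'))) = Pr p := by
  classical
  rw [Pr_eq_expect, Pr_eq_expect]
  exact Fintype.expect_equiv (Equiv.equivCongr (Equiv.refl _) (Equiv.swap e e')) _ _ fun σ => by
    simp [Equiv.equivCongr]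

lemma Pr_separates_insert_eq (he : e ∉ A ∪ B) (he' : e' ∉ A ∪ B) :
    Pr (Separates P (insert e' A) B) = Pr (Separates P (insert e A) B) := by
  rw [← Pr_comp_trans_swap e e']
  congr 1
  ext σ
  have hfix : ∀ x ∈ A ∪ B, Equiv.swap e e' x = x := fun x hx =>
    Equiv.swap_apply_of_ne_of_ne (by rintro rfl; exact he hx) (by rintro rfl; exact he' hx)
  simp only [Separates, Equiv.symm_trans_apply, Equiv.symm_swap, forall_mem_insert,
    Equiv.swap_apply_right]
  grind

lemma card_revealed_compl {σ : Ord n} (h : Separates P A B σ) :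
    #(revealed P (A ∪ B)ᶜ σ) = #P - #A := by
  have hP : P.map σ.toEmbedding = revealed P (A ∪ B)ᶜ σ ∪ A := by
    ext e
    simp only [mem_map_equiv, revealed, mem_union, mem_filter, mem_compl]
    grind [Separates]
  have hdisj : Disjoint (revealed P (A ∪ B)ᶜ σ) A := by
    refine disjoint_left.2 fun e he heA => ?_
    simp [revealed, heA] at he
  rw [← card_map σ.toEmbedding, hP, card_union_of_disjoint hdisj, Nat.add_sub_cancel]

lemma Pr_separates_insert_left (hAB : Disjoint A B) (he : e ∉ A ∪ B) :
    ((numEdges n - (#A + #B) : ℕ) : ℝ) * Pr (Separates P (insert e A) B) =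
      (#P - #A : ℕ) * Pr (Separates P A B) := by
  classical
  calc ((numEdges n - (#A + #B) : ℕ) : ℝ) * Pr (Separates P (insert e A) B)
      = ∑ e' ∈ (A ∪ B)ᶜ, Pr (Separates P (insert e' A) B) := by
        rw [sum_congr rfl fun e' he' => Pr_separates_insert_eq he (mem_compl.1 he'), sum_const,
          card_compl, card_edgeType, card_union_of_disjoint hAB, nsmul_eq_mul]
    _ = 𝔼 σ, ∑ e' ∈ (A ∪ B)ᶜ, if Separates P (insert e' A) B σ then 1 else 0 := by
        simp_rw [Pr_eq_expect, expect_sum_comm]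
    _ = 𝔼 σ, ((#P - #A : ℕ) : ℝ) * if Separates P A B σ then 1 else 0 := by
        refine expect_congr rfl fun σ _ => ?_
        rw [sum_boole]
        split_ifs with h
        · rw [← card_revealed_compl h, mul_one]
          congr 2
          ext e'
          simp only [mem_filter, mem_compl, mem_union, revealed]
          grind [Separates]
        · rw [mul_zero, filter_false_of_mem, card_empty, Nat.cast_zero]
          exact fun e' _ h' => h ⟨fun x hx => h'.1 x (mem_insert_of_mem hx), h'.2⟩
    _ = (#P - #A : ℕ) * Pr (Separates P A B) := by rw [← mul_expect, Pr_eq_expect]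

lemma separates_compl (P : Finset (Fin (numEdges n))) (A B : Finset (EdgeType n)) :
    Separates Pᶜ B A = Separates P A B := by
  ext σ
  simp [Separates, and_comm]

lemma Pr_separates_insert_right (hAB : Disjoint A B) (he : e ∉ A ∪ B) :
    ((numEdges n - (#A + #B) : ℕ) : ℝ) * Pr (Separates P A (insert e B)) =
      (numEdges n - #P - #B : ℕ) * Pr (Separates P A B) := by
  have := Pr_separates_insert_left (P := Pᶜ) hAB.symm (union_comm A B ▸ he)
  rwa [separates_compl, separates_compl, card_compl, Fintype.card_fin, add_comm] at this

lemma Pr_separates (hAB : Disjoint A B) :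
    Pr (Separates P A B) = separationProb (numEdges n) #P #A #B := by
  have hN : ((numEdges n).descFactorial (#A + #B) : ℝ) ≠ 0 := by
    rw [Nat.cast_ne_zero, Ne, Nat.descFactorial_eq_zero_iff_lt, not_lt, ← card_edgeType,
      ← card_union_of_disjoint hAB]
    exact card_le_univ _
  rw [separationProb, eq_div_iff hN]
  clear hN
  induction A using Finset.induction_on with
  | empty =>
    induction B using Finset.induction_on with
    | empty =>
      have : Separates P ∅ ∅ = fun _ => True := by ext; simp [Separates]
      simp [this, Pr_eq_expect]
    | insert e B he ih =>
      have hstep := Pr_separates_insert_right (P := P) (disjoint_empty_left B) (by simpa using he)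
      rw [card_insert_of_notMem he, ← add_assoc, Nat.descFactorial_succ, Nat.descFactorial_succ]
      push_cast
      linear_combination ((numEdges n).descFactorial (#(∅ : Finset (EdgeType n)) + #B) : ℝ) * hstep
        + ((numEdges n - #P - #B : ℕ) : ℝ) * ih (disjoint_empty_left B)
  | insert e A he ih =>
    rw [disjoint_insert_left] at hAB
    have hstep := Pr_separates_insert_left (P := P) hAB.2 (e := e) (by simp [he, hAB.1])
    rw [card_insert_of_notMem he, add_right_comm, Nat.descFactorial_succ, Nat.descFactorial_succ]
    push_cast
    linear_combination ((numEdges n).descFactorial (#A + #B) : ℝ) * hstep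
      + ((#P - #A : ℕ) : ℝ) * ih hAB.2

lemma Pr_card_revealed_and (P : Finset (Fin (numEdges n))) (D : Finset (EdgeType n)) (j : ℕ)
    (p : Ord n → Prop) :
    Pr (fun σ => #(revealed P D σ) = j ∧ p σ) =
      ∑ A ∈ D.powersetCard j, Pr fun σ => Separates P A (D \ A) σ ∧ p σ := by
  classical
  simp_rw [Pr_eq_expect, ← expect_sum_comm]
  refine expect_congr rfl fun σ _ => ?_
  have hsep : ∀ A ∈ D.powersetCard j, Separates P A (D \ A) σ ↔ revealed P D σ = A := by
    intro A hA
    rw [mem_powersetCard] at hA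
    grind [Separates, revealed]
  rw [sum_congr rfl fun A hA => by rw [hsep A hA]]
  by_cases hp : p σ
  · simp only [hp, and_true, sum_ite_eq, mem_powersetCard]
    simp only [revealed, filter_subset, true_and]
    congr
  · simp [hp]

lemma separates_and {A' B' : Finset (EdgeType n)} {σ : Ord n} :
    Separates P A B σ ∧ Separates P A' B' σ ↔ Separates P (A ∪ A') (B ∪ B') σ := by
  simp only [Separates, forall_mem_union]
  tauto

lemma Pr_card_revealed_and_separates {j : ℕ} (hAB : Disjoint A B) (hD : Disjoint D (A ∪ B)) :
    Pr (fun σ => #(revealed P D σ) = j ∧ Separates P A B σ) =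
      (#D).choose j * separationProb (numEdges n) #P (#A + j) (#B + (#D - j)) := by
  have hterm : ∀ A' ∈ D.powersetCard j,
      Pr (fun σ => Separates P A' (D \ A') σ ∧ Separates P A B σ) =
        separationProb (numEdges n) #P (#A + j) (#B + (#D - j)) := fun A' hA' => by
    rw [mem_powersetCard] at hA'
    rw [disjoint_union_right] at hD
    simp_rw [separates_and]
    have hA : Disjoint A' A := hD.1.mono_left hA'.1
    have hB : Disjoint (D \ A') B := hD.2.mono_left sdiff_subset
    have hdisj : Disjoint (A' ∪ A) (D \ A' ∪ B) := by
      simp only [disjoint_union_left, disjoint_union_right]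
      exact ⟨⟨disjoint_sdiff, hD.1.symm.mono_right sdiff_subset⟩, hD.2.mono_left hA'.1, hAB⟩
    rw [Pr_separates hdisj, card_union_of_disjoint hA, card_union_of_disjoint hB,
      card_sdiff_of_subset hA'.1, hA'.2, add_comm #A, add_comm #B]
  rw [Pr_card_revealed_and, sum_congr rfl hterm, sum_const, card_powersetCard, nsmul_eq_mul]

end Positions

section DegreeDistribution

variable {n : ℕ} {P : Finset (Fin (numEdges n))} {A B D D' : Finset (EdgeType n)}

lemma Pr_card_revealed (P : Finset (Fin (numEdges n))) (D : Finset (EdgeType n)) (j : ℕ) :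
    Pr (fun σ => #(revealed P D σ) = j) =
      (#D).choose j * separationProb (numEdges n) #P j (#D - j) := by
  simpa [Separates] using Pr_card_revealed_and_separates (P := P) (D := D) (j := j)
    (disjoint_empty_left ∅) (by simp)

lemma Pr_card_revealed_and_card_revealed_and_separates {j j' : ℕ} (hAB : Disjoint A B)
    (hD : Disjoint D (A ∪ B)) (hD' : Disjoint D' (A ∪ B)) (hDD' : Disjoint D D') :
    Pr (fun σ => #(revealed P D σ) = j ∧ #(revealed P D' σ) = j' ∧ Separates P A B σ) =
      (#D).choose j * (#D').choose j' *
        separationProb (numEdges n) #P (#A + j + j') (#B + (#D - j) + (#D' - j')) := by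
  have hterm : ∀ C ∈ D.powersetCard j,
      Pr (fun σ => Separates P C (D \ C) σ ∧ #(revealed P D' σ) = j' ∧ Separates P A B σ) =
        (#D').choose j' *
          separationProb (numEdges n) #P (#A + j + j') (#B + (#D - j) + (#D' - j')) := by
    intro C hC
    rw [mem_powersetCard] at hC
    rw [disjoint_union_right] at hD hD'
    have hA : Disjoint A C := hD.1.symm.mono_right hC.1
    have hB : Disjoint B (D \ C) := hD.2.symm.mono_right sdiff_subset
    simp_rw [and_left_comm (a := Separates P C (D \ C) _), and_comm (a := Separates P C (D \ C) _),
      separates_and]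
    rw [Pr_card_revealed_and_separates, card_union_of_disjoint hA, card_union_of_disjoint hB,
      card_sdiff_of_subset hC.1, hC.2]
    · simp only [disjoint_union_left, disjoint_union_right]
      exact ⟨⟨hAB, hD.2.mono_left hC.1⟩, hD.1.symm.mono_right sdiff_subset, disjoint_sdiff⟩
    · simp only [disjoint_union_right]
      exact ⟨⟨hD'.1, hDD'.symm.mono_right hC.1⟩, hD'.2, hDD'.symm.mono_right sdiff_subset⟩
  rw [Pr_card_revealed_and, sum_congr rfl hterm, sum_const, card_powersetCard, nsmul_eq_mul,
    mul_assoc]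

/-- The edges of the complete graph at the vertex `v`. -/
def star (v : Fin n) : Finset (EdgeType n) := {e | v ∈ e.1}

/-- The set of the times `a, a + 1, …, b - 1`. -/
def times (n a b : ℕ) : Finset (Fin (numEdges n)) := {j | a ≤ j ∧ j < b}

lemma mem_star {v : Fin n} {e : EdgeType n} : e ∈ star v ↔ v ∈ e.1 := by simp [star]

lemma card_star (v : Fin n) : #(star v) = n - 1 := by
  have h : (star v).map (Function.Embedding.subtype _) =
      (⊤ : SimpleGraph (Fin n)).incidenceFinset v := by
    ext e
    simp [star, SimpleGraph.incidenceSet, and_comm]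
  rw [← card_map (Function.Embedding.subtype _), h, SimpleGraph.card_incidenceFinset_eq_degree,
    SimpleGraph.complete_graph_degree, Fintype.card_fin]

lemma card_times {a b : ℕ} (hb : b ≤ numEdges n) : #(times n a b) = b - a := by
  rw [← Nat.card_Ico, ← card_map Fin.valEmbedding]
  congr 1
  ext j
  simp only [times, Finset.mem_map, mem_filter, mem_univ, true_and, mem_Ico, Fin.valEmbedding_apply]
  exact ⟨by rintro ⟨j, h, rfl⟩; exact h, fun h => ⟨⟨j, by lia⟩, h, rfl⟩⟩

lemma val_mem_procEdges (σ : Ord n) (e : EdgeType n) {i : ℕ} :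
    e.1 ∈ procEdges σ i ↔ σ.symm e < i := by
  rw [mem_procEdges]
  constructor
  · rintro ⟨j, hj, h⟩
    rwa [← Subtype.ext h, σ.symm_apply_apply]
  · exact fun h => ⟨σ.symm e, h, by rw [σ.apply_symm_apply]⟩

lemma card_revealed_star (σ : Ord n) (v : Fin n) {a b : ℕ} (hab : a ≤ b) :
    #(revealed (times n a b) (star v) σ) + deg (procEdges σ a) v = deg (procEdges σ b) v := by
  have h : (revealed (times n a b) (star v) σ).map (Function.Embedding.subtype _) =
      {e ∈ procEdges σ b | v ∈ e} \ {e ∈ procEdges σ a | v ∈ e} := by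
    ext e
    by_cases he : e.IsDiag
    · have : ∀ i, e ∉ procEdges σ i := fun i hi => by
        obtain ⟨j, -, rfl⟩ := (mem_procEdges σ).1 hi
        exact (σ j).2 he
      simp [he, this]
    · simp only [revealed, times, mem_filter, mem_univ, true_and, Finset.mem_map, mem_star,
        Function.Embedding.subtype_apply, Subtype.exists, exists_and_right, exists_and_left,
        exists_eq_right, he, not_false_eq_true, exists_true_left, Finset.mem_sdiff,
        val_mem_procEdges σ ⟨e, he⟩, not_and]
      lia
  rw [deg, deg, ← card_map (Function.Embedding.subtype _), h,
    card_sdiff_add_card_eq_card (filter_subset_filter _ (procEdges_mono σ hab))]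

lemma star_inter_star {u v : Fin n} (huv : u ≠ v) :
    star u ∩ star v = {⟨s(u, v), by simpa using huv⟩} := by
  ext e
  simp [mem_star, Subtype.ext_iff, Sym2.mem_and_mem_iff huv]

lemma card_star_sdiff_star {u v : Fin n} (huv : u ≠ v) : #(star u \ star v) = n - 2 := by
  have := card_sdiff_add_card_inter (star u) (star v)
  rw [star_inter_star huv, card_singleton, card_star] at this
  lia

lemma Pr_card_revealed_star_eq (v : Fin n) {a b : ℕ} (hb : b ≤ numEdges n) (r : ℕ) :
    Pr (fun σ => #(revealed (times n a b) (star v) σ) = r) =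
      (n - 1).choose r * separationProb (numEdges n) (b - a) r (n - 1 - r) := by
  rw [Pr_card_revealed, card_star, card_times hb]

lemma Pr_card_revealed_star_star_le {u v : Fin n} (huv : u ≠ v) {r : ℕ} (hr : 1 ≤ r) :
    Pr (fun σ => #(revealed P (star u) σ) = r ∧ #(revealed P (star v) σ) = r) ≤
      (n - 2).choose r ^ 2 * separationProb (numEdges n) #P (2 * r) (2 * (n - 2 - r) + 1) +
        (n - 2).choose (r - 1) ^ 2 *
          separationProb (numEdges n) #P (2 * r - 1) (2 * (n - 1 - r)) := by
  set e : EdgeType n := ⟨s(u, v), by simpa using huv⟩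
  set D := star u \ star v
  set D' := star v \ star u
  have heD : e ∉ D ∧ e ∉ D' := by simp [D, D', e, mem_star]
  have hDD' : Disjoint D D' := disjoint_sdiff_sdiff
  have hcard (σ : Ord n) : (#(revealed P (star u) σ) = r ∧ #(revealed P (star v) σ) = r) →
      (#(revealed P D σ) = r ∧ #(revealed P D' σ) = r ∧ Separates P ∅ {e} σ) ∨
      (#(revealed P D σ) = r - 1 ∧ #(revealed P D' σ) = r - 1 ∧ Separates P {e} ∅ σ) := by
    have hu : star u = insert e D := by
      rw [insert_eq, ← star_inter_star huv, union_comm, sdiff_union_inter]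
    have hv : star v = insert e D' := by
      rw [insert_eq, ← star_inter_star huv, union_comm, inter_comm, sdiff_union_inter]
    rw [hu, hv]
    simp only [revealed, filter_insert, Separates]
    by_cases h : σ.symm e ∈ P
    · simp [h, heD]
      lia
    · simp [h]
  refine (Pr_mono hcard).trans ((Pr_or_le _ _).trans_eq ?_)
  rw [Pr_card_revealed_and_card_revealed_and_separates (by simp) (by simp [heD]) (by simp [heD])
      hDD', Pr_card_revealed_and_card_revealed_and_separates (by simp) (by simp [heD])
      (by simp [heD]) hDD', card_star_sdiff_star huv, card_star_sdiff_star huv.symm]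
  simp only [card_empty, card_singleton, ← sq]
  congr! 3 <;> lia

end DegreeDistribution

section FallingFactorials

lemma descFactorial_le_pow_mul_descFactorial {c : ℝ} {x y j : ℕ}
    (h : ∀ i < j, ((x - i : ℕ) : ℝ) ≤ c * (y - i : ℕ)) :
    (x.descFactorial j : ℝ) ≤ c ^ j * y.descFactorial j := by
  simp only [Nat.descFactorial_eq_prod_range, Nat.cast_prod]
  rw [← card_range j, ← prod_const, card_range, ← prod_mul_distrib]
  exact prod_le_prod (fun _ _ => by positivity) fun i hi => h i (Finset.mem_range.1 hi)

lemma descFactorial_sub_le_exp_mul (N p b : ℕ) :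
    ((N - p).descFactorial b : ℝ) ≤ Real.exp (-(p * b / N)) * N.descFactorial b := by
  have h := descFactorial_le_pow_mul_descFactorial (c := Real.exp (-(p / N))) (x := N - p) (y := N)
    (j := b) fun i _ => ?_
  · refine h.trans_eq ?_
    rw [← Real.exp_nat_mul]
    ring_nf
  · obtain hi | hi := le_or_gt N (p + i)
    · rw [show N - p - i = 0 by lia, Nat.cast_zero]
      positivity
    · have hN : (0 : ℝ) < N := by exact_mod_cast hi.pos
      rw [Nat.sub_sub, Nat.cast_sub hi.le, Nat.cast_sub (by lia)]
      have hi' : (0 : ℝ) ≤ N - i := by exact_mod_cast (by lia : (0 : ℤ) ≤ N - i)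
      calc (N : ℝ) - (p + i : ℕ) ≤ (1 - p / N) * (N - i) := by
            push_cast
            have : 0 ≤ (p : ℝ) / N * i := by positivity
            linear_combination this + div_mul_cancel₀ (p : ℝ) hN.ne'
        _ ≤ _ := by gcongr; exact Real.one_sub_le_exp_neg _

lemma exp_mul_descFactorial_le_descFactorial_sub {N p b : ℕ} (h : b + p < N) :
    Real.exp (-(p * b / (N - (b + p)))) * N.descFactorial b ≤ ((N - p).descFactorial b : ℝ) := by
  have hD : (0 : ℝ) < N - (b + p) := by
    rw [sub_pos]; exact_mod_cast h
  rw [Real.exp_neg, inv_mul_le_iff₀ (Real.exp_pos _)]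
  refine (descFactorial_le_pow_mul_descFactorial
    (c := Real.exp (p / (N - (b + p)))) (y := N - p) fun i hi => ?_).trans_eq ?_
  · rw [Nat.sub_sub, Nat.cast_sub (by lia), Nat.cast_sub (by lia)]
    push_cast
    have hi' : (i : ℝ) ≤ b := by exact_mod_cast hi.le
    have hi'' : (0 : ℝ) ≤ N - (p + i) := by linarith
    calc (N : ℝ) - i ≤ (p / (N - (b + p)) + 1) * (N - (p + i)) := by
          have : (p : ℝ) / (N - (b + p)) * (N - (b + p)) ≤ p / (N - (b + p)) * (N - (p + i)) :=
            mul_le_mul_of_nonneg_left (by linarith) (by positivity)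
          rw [div_mul_cancel₀ _ hD.ne'] at this
          linarith
      _ ≤ _ := mul_le_mul_of_nonneg_right (Real.add_one_le_exp _) hi''
  · rw [← Real.exp_nat_mul]
    ring_nf

variable {ι : Type*} {l : Filter ι} {N p b : ι → ℕ}

lemma isEquivalent_descFactorial_sub (hN : Tendsto N l atTop)
    (h₁ : Tendsto (fun i => (b i + p i : ℝ) / N i) l (𝓝 0))
    (h₂ : Tendsto (fun i => p i * b i * (b i + p i : ℝ) / N i ^ 2) l (𝓝 0)) :
    (fun i => ((N i - p i).descFactorial (b i) : ℝ)) ~[l]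
      fun i => Real.exp (-(p i * b i / N i)) * (N i).descFactorial (b i) := by
  have hlt : ∀ᶠ i in l, b i + p i < N i := by
    filter_upwards [h₁.eventually_lt_const one_pos, hN.eventually_gt_atTop 0] with i hi hNi
    rw [div_lt_one (by exact_mod_cast hNi)] at hi
    exact_mod_cast hi
  have herr : Tendsto (fun i => (p i * b i * (b i + p i : ℝ) / N i ^ 2) /
      (1 - (b i + p i : ℝ) / N i)) l (𝓝 0) := by
    simpa [Pi.div_def] using h₂.div (h₁.const_sub 1) (by norm_num)
  refine isEquivalent_of_tendsto_one (tendsto_of_tendsto_of_tendsto_of_le_of_le'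
    (by simpa using (Real.continuous_exp.tendsto 0).comp (by simpa using herr.neg))
    tendsto_const_nhds ?_ (.of_forall fun i => ?_))
  · filter_upwards [hlt] with i hi
    have hNi : (0 : ℝ) < N i := by exact_mod_cast hi.pos
    have hD : (0 : ℝ) < N i - (b i + p i) := by
      rw [sub_pos]; exact_mod_cast hi
    have hpos : (0 : ℝ) < (N i).descFactorial (b i) := by
      exact_mod_cast Nat.descFactorial_pos.2 (by lia)
    rw [Pi.div_apply, le_div_iff₀ (by positivity), ← mul_assoc, Function.comp_apply,
      ← Real.exp_add]
    refine le_of_eq_of_le ?_ (exp_mul_descFactorial_le_descFactorial_sub hi)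
    congr 2
    field_simp
    ring
  · exact div_le_one_of_le₀ (descFactorial_sub_le_exp_mul _ _ _) (by positivity)

lemma isEquivalent_natCast_sub (hN : Tendsto N l atTop)
    (hb : Tendsto (fun i => (b i : ℝ) / N i) l (𝓝 0)) :
    (fun i => ((N i - b i : ℕ) : ℝ)) ~[l] fun i => (N i : ℝ) := by
  refine isEquivalent_of_tendsto_one ((by simpa using hb.const_sub 1 :
    Tendsto (fun i => 1 - (b i : ℝ) / N i) l (𝓝 1)).congr' ?_)
  filter_upwards [hb.eventually_lt_const one_pos, hN.eventually_gt_atTop 0] with i hi hNi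
  have hNi' : (0 : ℝ) < N i := by exact_mod_cast hNi
  rw [div_lt_one hNi'] at hi
  rw [Pi.div_apply, Nat.cast_sub (by exact_mod_cast hi.le), sub_div, div_self hNi'.ne']

lemma isEquivalent_separationProb (a : ℕ) (hp : Tendsto p l atTop) (hN : Tendsto N l atTop)
    (h₁ : Tendsto (fun i => (b i + p i : ℝ) / N i) l (𝓝 0))
    (h₂ : Tendsto (fun i => p i * b i * (b i + p i : ℝ) / N i ^ 2) l (𝓝 0)) :
    (fun i => separationProb (N i) (p i) a (b i)) ~[l]
      fun i => (p i / N i : ℝ) ^ a * Real.exp (-(p i * b i / N i)) := by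
  have hb : Tendsto (fun i => (b i : ℝ) / N i) l (𝓝 0) :=
    squeeze_zero (fun i => by positivity) (fun i => by gcongr; simp) h₁
  have hNb := isEquivalent_natCast_sub hN hb
  have hNb_top : Tendsto (fun i => N i - b i) l atTop := by
    rw [← tendsto_natCast_atTop_iff (R := ℝ), hNb.tendsto_atTop_iff]
    exact tendsto_natCast_atTop_atTop.comp hN
  have hnum := ((isEquivalent_descFactorial a).comp_tendsto hp).mul
    (isEquivalent_descFactorial_sub hN h₁ h₂)
  have hden := (((isEquivalent_descFactorial a).comp_tendsto hNb_top).trans (hNb.pow a)).mul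
    (IsEquivalent.refl (u := fun i => ((N i).descFactorial (b i) : ℝ)))
  refine ((hnum.div hden).congr_left (.of_forall fun i => ?_)).congr_right ?_
  · have h := Nat.descFactorial_mul_descFactorial (n := N i) (k := b i) (m := a + b i) (by lia)
    rw [Nat.add_sub_cancel] at h
    simp [separationProb, ← h]
  · filter_upwards [hb.eventually_lt_const one_pos, hN.eventually_gt_atTop 0] with i hi hNi
    have hNi' : (0 : ℝ) < N i := by exact_mod_cast hNi
    rw [div_lt_one hNi', Nat.cast_lt] at hi
    have hpos : ((N i).descFactorial (b i) : ℝ) ≠ 0 := by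
      exact_mod_cast (Nat.descFactorial_pos.2 hi.le).ne'
    rw [div_pow]
    simp only [Pi.div_apply, Pi.mul_apply, Function.comp_apply, Pi.pow_apply]
    field_simp

end FallingFactorials

section DegreeAsymptotics

/-- The average degree of a graph with `n` vertices and `p` edges. -/
noncomputable def meanDeg (n p : ℕ) : ℝ := 2 * p / n

/-- The probability that a Poisson variable of mean `x` equals `r`; the mean is a real number, so
that it can be a difference. -/
noncomputable def poissonProb (x : ℝ) (r : ℕ) : ℝ := x ^ r / r ! * Real.exp (-x)

/-- The probability that a given vertex of `K_n` is incident to exactly `r` of `p` given positions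
of the process. -/
noncomputable def degreeProb (n p r : ℕ) : ℝ :=
  (n - 1).choose r * separationProb (numEdges n) p r (n - 1 - r)

/-- A bound for the probability that two given vertices of `K_n` are each incident to exactly `r`
of `p` given positions of the process; the two summands correspond to the edge between the vertices
being absent and present. -/
noncomputable def pairDegreeBound (n p r : ℕ) : ℝ :=
  (n - 2).choose r ^ 2 * separationProb (numEdges n) p (2 * r) (2 * (n - 2 - r) + 1) +
    (n - 2).choose (r - 1) ^ 2 *
      separationProb (numEdges n) p (2 * r - 1) (2 * (n - 1 - r))

lemma natCast_numEdges (n : ℕ) : (numEdges n : ℝ) = n * (n - 1) / 2 := by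
  rw [numEdges, ← Nat.choose_two_right, Nat.cast_choose_two]

lemma tendsto_numEdges : Tendsto numEdges atTop atTop :=
  tendsto_atTop_mono' _ ((eventually_ge_atTop 3).mono fun n hn => by
    rw [numEdges, Nat.le_div_iff_mul_le two_pos]
    exact Nat.mul_le_mul_left n (by lia)) tendsto_id

lemma isEquivalent_exp_of_tendsto_sub {ι : Type*} {l : Filter ι} {f g : ι → ℝ}
    (h : Tendsto (fun i => f i - g i) l (𝓝 0)) :
    (fun i => Real.exp (f i)) ~[l] fun i => Real.exp (g i) :=
  isEquivalent_of_tendsto_one <| by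
    simpa [Pi.div_def, ← Real.exp_sub, Function.comp_def] using
      (Real.continuous_exp.tendsto 0).comp h

lemma isEquivalent_choose_sub (s r : ℕ) :
    (fun n : ℕ => ((n - s).choose r : ℝ)) ~[atTop] fun n => (n : ℝ) ^ r / r ! := by
  have hsub : (fun n : ℕ => ((n - s : ℕ) : ℝ)) ~[atTop] fun n : ℕ => (n : ℝ) :=
    isEquivalent_natCast_sub tendsto_id (tendsto_const_div_atTop_nhds_zero_nat _)
  exact ((isEquivalent_choose r).comp_tendsto (tendsto_sub_atTop_nat s)).trans
    ((hsub.pow r).div .refl)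

variable {p : ℕ → ℕ}

lemma eventually_le_of_tendsto_meanDeg (hp : Tendsto (fun n => meanDeg n (p n)) atTop atTop) :
    ∀ᶠ n in atTop, n ≤ p n := by
  filter_upwards [hp.eventually_ge_atTop 2, eventually_gt_atTop 0] with n hn hn0
  rw [meanDeg, le_div_iff₀ (by exact_mod_cast hn0)] at hn
  exact_mod_cast (by linarith : (n : ℝ) ≤ p n)

lemma tendsto_meanDeg_div (hp : Tendsto (fun n => meanDeg n (p n)) atTop atTop)
    (hp2 : Tendsto (fun n => meanDeg n (p n) ^ 2 / n) atTop (𝓝 0)) :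
    Tendsto (fun n => meanDeg n (p n) / n) atTop (𝓝 0) := by
  refine squeeze_zero' (.of_forall fun n => by unfold meanDeg; positivity) ?_ hp2
  filter_upwards [hp.eventually_ge_atTop 1] with n hn
  gcongr
  exact le_self_pow₀ hn two_ne_zero

lemma div_numEdges_eq {n : ℕ} (hn : 2 ≤ n) (p : ℕ) :
    (p / numEdges n : ℝ) = meanDeg n p / (n - 1 : ℕ) := by
  have : (2 : ℝ) ≤ n := by exact_mod_cast hn
  rw [natCast_numEdges, meanDeg, Nat.cast_pred (by lia)]
  field_simp

lemma isEquivalent_div_numEdges (p : ℕ → ℕ) :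
    (fun n => (p n / numEdges n : ℝ)) ~[atTop] fun n => meanDeg n (p n) / n := by
  have h : (fun n : ℕ => ((n - 1 : ℕ) : ℝ)) ~[atTop] fun n : ℕ => (n : ℝ) :=
    isEquivalent_natCast_sub tendsto_id (tendsto_const_div_atTop_nhds_zero_nat _)
  refine (IsEquivalent.refl.div h).congr_left ?_
  filter_upwards [eventually_ge_atTop 2] with n hn
  rw [div_numEdges_eq hn]
  rfl

section EdgeCounts

variable {b : ℕ → ℕ} {c : ℕ}

lemma eventually_add_le (hb : ∀ᶠ n in atTop, b n ≤ c * n)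
    (hp : Tendsto (fun n => meanDeg n (p n)) atTop atTop) :
    ∀ᶠ n in atTop, (b n + p n : ℝ) ≤ (c + 1) * p n := by
  filter_upwards [eventually_le_of_tendsto_meanDeg hp, hb] with n hn hbn
  have := Nat.mul_le_mul_left c hn
  exact_mod_cast (by linarith : b n + p n ≤ (c + 1) * p n)

lemma tendsto_div_numEdges (hp : Tendsto (fun n => meanDeg n (p n)) atTop atTop)
    (hp2 : Tendsto (fun n => meanDeg n (p n) ^ 2 / n) atTop (𝓝 0)) :
    Tendsto (fun n => (p n / numEdges n : ℝ)) atTop (𝓝 0) :=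
  (isEquivalent_div_numEdges p).symm.tendsto_nhds (tendsto_meanDeg_div hp hp2)

lemma tendsto_add_div_numEdges (hb : ∀ᶠ n in atTop, b n ≤ c * n)
    (hp : Tendsto (fun n => meanDeg n (p n)) atTop atTop)
    (hp2 : Tendsto (fun n => meanDeg n (p n) ^ 2 / n) atTop (𝓝 0)) :
    Tendsto (fun n => (b n + p n : ℝ) / numEdges n) atTop (𝓝 0) := by
  refine squeeze_zero' (.of_forall fun n => by positivity) ?_
    (by simpa using (tendsto_div_numEdges hp hp2).const_mul (c + 1 : ℝ))
  filter_upwards [eventually_add_le hb hp] with n hn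
  rw [← mul_div_assoc]
  gcongr

lemma tendsto_mul_add_div_numEdges_sq (hb : ∀ᶠ n in atTop, b n ≤ c * n)
    (hp : Tendsto (fun n => meanDeg n (p n)) atTop atTop)
    (hp2 : Tendsto (fun n => meanDeg n (p n) ^ 2 / n) atTop (𝓝 0)) :
    Tendsto (fun n => p n * b n * (b n + p n : ℝ) / (numEdges n : ℝ) ^ 2) atTop (𝓝 0) := by
  have hsq : Tendsto (fun n : ℕ => (n : ℝ) * (p n / numEdges n : ℝ) ^ 2) atTop (𝓝 0) := by
    refine (IsEquivalent.refl.mul ((isEquivalent_div_numEdges p).pow 2)).symm.tendsto_nhds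
      (hp2.congr fun n => ?_)
    simp only [Pi.mul_apply, Pi.pow_apply]
    field_simp
  refine squeeze_zero' (.of_forall fun n => by positivity) ?_
    (by simpa using hsq.const_mul (c * (c + 1) : ℝ))
  filter_upwards [eventually_add_le hb hp, hb] with n hn hbn
  have hbn' : (b n : ℝ) ≤ c * n := by exact_mod_cast hbn
  calc (p n * b n * (b n + p n) / numEdges n ^ 2 : ℝ)
      ≤ p n * (c * n) * ((c + 1) * p n) / numEdges n ^ 2 := by gcongr
    _ = c * (c + 1) * (n * (p n / numEdges n) ^ 2) := by ring

end EdgeCounts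

lemma isEquivalent_separationProb_numEdges (a c s : ℕ) {b : ℕ → ℕ}
    (hb : ∀ᶠ n in atTop, b n + s = c * n)
    (hp : Tendsto (fun n => meanDeg n (p n)) atTop atTop)
    (hp2 : Tendsto (fun n => meanDeg n (p n) ^ 2 / n) atTop (𝓝 0)) :
    (fun n => separationProb (numEdges n) (p n) a (b n)) ~[atTop]
      fun n => (meanDeg n (p n) / n) ^ a * Real.exp (-(c * meanDeg n (p n))) := by
  have hb_le : ∀ᶠ n in atTop, b n ≤ c * n := hb.mono fun n hn => by lia
  have hp_top : Tendsto p atTop atTop :=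
    tendsto_atTop_mono' _ (eventually_le_of_tendsto_meanDeg hp) tendsto_id
  refine (isEquivalent_separationProb a hp_top tendsto_numEdges
    (tendsto_add_div_numEdges hb_le hp hp2) (tendsto_mul_add_div_numEdges_sq hb_le hp hp2)).trans
    (((isEquivalent_div_numEdges p).pow a).mul (isEquivalent_exp_of_tendsto_sub ?_))
  refine Tendsto.congr' ?_
    (by simpa using (tendsto_div_numEdges hp hp2).const_mul (s - c : ℝ))
  filter_upwards [hb, eventually_ge_atTop 2] with n hbn hn
  have hn' : (n - 1 : ℝ) ≠ 0 := by
    rw [sub_ne_zero]; exact_mod_cast (by lia : n ≠ 1)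
  have hbn' : (b n : ℝ) = c * n - s := by
    rw [eq_sub_iff_add_eq]; exact_mod_cast hbn
  rw [mul_div_right_comm, div_numEdges_eq hn, hbn', Nat.cast_pred (by lia)]
  field_simp
  ring

lemma isEquivalent_degreeProb (r : ℕ) (hp : Tendsto (fun n => meanDeg n (p n)) atTop atTop)
    (hp2 : Tendsto (fun n => meanDeg n (p n) ^ 2 / n) atTop (𝓝 0)) :
    (fun n => degreeProb n (p n) r) ~[atTop] fun n => poissonProb (meanDeg n (p n)) r := by
  have hb : ∀ᶠ n in atTop, n - 1 - r + (r + 1) = 1 * n :=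
    (eventually_ge_atTop (r + 1)).mono fun n hn => by lia
  refine ((isEquivalent_choose_sub 1 r).mul
    (isEquivalent_separationProb_numEdges r 1 (r + 1) hb hp hp2)).congr_right ?_
  filter_upwards [eventually_gt_atTop 0] with n hn
  have : (n : ℝ) ≠ 0 := by exact_mod_cast hn.ne'
  rw [Pi.mul_apply, poissonProb, Nat.cast_one, one_mul, div_pow]
  field_simp

lemma isEquivalent_pairDegreeBound {r : ℕ} (hr : 1 ≤ r)
    (hp : Tendsto (fun n => meanDeg n (p n)) atTop atTop)
    (hp2 : Tendsto (fun n => meanDeg n (p n) ^ 2 / n) atTop (𝓝 0)) :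
    (fun n => pairDegreeBound n (p n) r) ~[atTop]
      fun n => poissonProb (meanDeg n (p n)) r ^ 2 := by
  have habsent := ((isEquivalent_choose_sub 2 r).pow 2).mul
    (isEquivalent_separationProb_numEdges (b := fun n => 2 * (n - 2 - r) + 1) (2 * r) 2 (2 * r + 3)
      ((eventually_ge_atTop (r + 2)).mono fun n hn => by lia) hp hp2)
  have hpresent := ((isEquivalent_choose_sub 2 (r - 1)).pow 2).mul
    (isEquivalent_separationProb_numEdges (b := fun n => 2 * (n - 1 - r)) (2 * r - 1) 2 (2 * r + 2)
      ((eventually_ge_atTop (r + 1)).mono fun n hn => by lia) hp hp2)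
  have hexp : ∀ x : ℝ, Real.exp (-(2 * x)) = Real.exp (-x) ^ 2 := fun x => by
    rw [← Real.exp_nat_mul]
    ring_nf
  refine (habsent.congr_right ?_).add_isLittleO (hpresent.trans_isLittleO
    (isLittleO_iff_exists_eq_mul.2 ⟨fun n => r ^ 2 / n / meanDeg n (p n),
      (tendsto_const_div_atTop_nhds_zero_nat _).div_atTop hp, ?_⟩))
  · filter_upwards [eventually_gt_atTop 0] with n hn
    have : (n : ℝ) ≠ 0 := by exact_mod_cast hn.ne'
    simp only [Pi.mul_apply, Pi.pow_apply, poissonProb, Nat.cast_ofNat, hexp, div_pow]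
    field_simp
    ring
  · filter_upwards [eventually_gt_atTop 0, hp.eventually_gt_atTop 0] with n hn hpn
    have : (n : ℝ) ≠ 0 := by exact_mod_cast hn.ne'
    obtain ⟨t, rfl⟩ := Nat.exists_eq_add_of_le' hr
    simp only [Pi.mul_apply, Pi.pow_apply, poissonProb, Nat.cast_ofNat, hexp, div_pow,
      Nat.add_sub_cancel, Nat.factorial_succ, show 2 * (t + 1) - 1 = 2 * t + 1 by lia]
    push_cast
    field_simp
    ring

end DegreeAsymptotics

section SecondMoment

variable {n : ℕ}

lemma Pr_forall_not_le {A : Fin n → Ord n → Prop} {P R : ℝ} (hn : 0 < n) (hP : 0 < P) (hR : 0 ≤ R)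
    (hA : ∀ v, Pr (A v) = P) (hAA : ∀ u v, u ≠ v → Pr (fun σ => A u σ ∧ A v σ) ≤ R) :
    Pr (fun σ => ∀ v, ¬ A v σ) ≤ 1 / (n * P) + R / P ^ 2 - 1 := by
  classical
  have : (0 : ℝ) < n := by exact_mod_cast hn
  set X : Ord n → ℝ := fun σ => ∑ v, if A v σ then 1 else 0
  have hX : 𝔼 σ, X σ = n * P := by
    rw [expect_sum_comm]
    simp [← Pr_eq_expect, hA]
  have hX2 : 𝔼 σ, X σ ^ 2 ≤ n * P + n ^ 2 * R := by
    calc 𝔼 σ, X σ ^ 2 = ∑ u, ∑ v, Pr (fun σ => A u σ ∧ A v σ) := by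
          simp_rw [X, sq, sum_mul_sum, expect_sum_comm, Pr_eq_expect, ite_and, ite_mul, one_mul,
            zero_mul]
      _ ≤ ∑ u : Fin n, ∑ v : Fin n, ((if u = v then P else 0) + R) := by
          gcongr with u _ v
          obtain rfl | huv := eq_or_ne u v
          · simpa [hA] using hR
          · simpa [huv] using hAA u v huv
      _ = n * P + n ^ 2 * R := by
          simp only [sum_add_distrib, sum_ite_eq, mem_univ, if_true, sum_const, card_univ,
            Fintype.card_fin, nsmul_eq_mul]
          ring
  calc Pr (fun σ => ∀ v, ¬ A v σ)
      ≤ (𝔼 σ, (X σ - n * P) ^ 2) / (n * P) ^ 2 :=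
        Pr_le_expect_div (fun _ => sq_nonneg _) (by positivity) fun σ hσ => by simp [X, hσ]
    _ = (𝔼 σ, X σ ^ 2 - (n * P) ^ 2) / (n * P) ^ 2 := by
        simp_rw [sub_sq, expect_add_distrib, expect_sub_distrib, ← expect_mul, ← mul_expect, hX,
          Fintype.expect_const]
        ring
    _ ≤ (n * P + n ^ 2 * R - (n * P) ^ 2) / (n * P) ^ 2 := by gcongr
    _ = 1 / (n * P) + R / P ^ 2 - 1 := by field_simp

end SecondMoment

lemma degreeProb_eq_Pr {n : ℕ} (v : Fin n) {a b : ℕ} (hab : a ≤ b) (hb : b ≤ numEdges n) (r : ℕ) :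
    Pr (fun σ => deg (procEdges σ b) v = r + deg (procEdges σ a) v) = degreeProb n (b - a) r := by
  simp_rw [← card_revealed_star _ v hab, add_left_inj]
  exact Pr_card_revealed_star_eq v hb r

lemma deg_procEdges_zero {n : ℕ} (σ : Ord n) (v : Fin n) : deg (procEdges σ 0) v = 0 := by
  simp [procEdges, deg]

lemma Pr_deg_eq {n p : ℕ} (v : Fin n) (hp : p ≤ numEdges n) (r : ℕ) :
    Pr (fun σ => deg (procEdges σ p) v = r) = degreeProb n p r := by
  simpa [deg_procEdges_zero] using degreeProb_eq_Pr v p.zero_le hp r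

lemma Pr_deg_eq_and_deg_eq_le {n p r : ℕ} {u v : Fin n} (huv : u ≠ v) (hp : p ≤ numEdges n)
    (hr : 1 ≤ r) :
    Pr (fun σ => deg (procEdges σ p) u = r ∧ deg (procEdges σ p) v = r) ≤
      pairDegreeBound n p r := by
  simpa [← card_revealed_star _ _ p.zero_le, deg_procEdges_zero, card_times hp, pairDegreeBound]
    using Pr_card_revealed_star_star_le (P := times n 0 p) huv hr

lemma pairDegreeBound_nonneg (n p r : ℕ) : 0 ≤ pairDegreeBound n p r := by
  unfold pairDegreeBound separationProb
  positivity

lemma poissonProb_pos {x : ℝ} (hx : 0 < x) (r : ℕ) : 0 < poissonProb x r := by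
  unfold poissonProb
  positivity

section DegreeLimits

variable {p a b : ℕ → ℕ} {r : ℕ}

lemma eventually_le_numEdges (hp : Tendsto (fun n => meanDeg n (p n)) atTop atTop)
    (hp2 : Tendsto (fun n => meanDeg n (p n) ^ 2 / n) atTop (𝓝 0)) :
    ∀ᶠ n in atTop, p n ≤ numEdges n := by
  filter_upwards [(tendsto_div_numEdges hp hp2).eventually_lt_const one_pos,
    tendsto_numEdges.eventually_gt_atTop 0] with n hn hN
  rw [div_lt_one (by exact_mod_cast hN)] at hn
  exact_mod_cast hn.le

/-- Having degree `r` is asymptotically independent for two vertices, so the second moment method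
produces a vertex of degree `r` as soon as the expected number of them tends to infinity. -/
lemma tendsto_Pr_forall_deg_ne (hr : 1 ≤ r)
    (hp : Tendsto (fun n => meanDeg n (p n)) atTop atTop)
    (hp2 : Tendsto (fun n => meanDeg n (p n) ^ 2 / n) atTop (𝓝 0))
    (hr_top : Tendsto (fun n => n * poissonProb (meanDeg n (p n)) r) atTop atTop) :
    Tendsto (fun n => Pr fun σ : Ord n => ∀ v, deg (procEdges σ (p n)) v ≠ r) atTop (𝓝 0) := by
  have hP := isEquivalent_degreeProb r hp hp2
  have hpos : ∀ᶠ n in atTop, 0 < poissonProb (meanDeg n (p n)) r :=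
    (hp.eventually_gt_atTop 0).mono fun n hn => poissonProb_pos hn r
  have hnP : Tendsto (fun n => 1 / (n * degreeProb n (p n) r)) atTop (𝓝 0) :=
    ((IsEquivalent.refl.mul hP).tendsto_atTop_iff.2 hr_top).const_div_atTop 1
  have hratio : Tendsto (fun n => pairDegreeBound n (p n) r / degreeProb n (p n) r ^ 2)
      atTop (𝓝 1) := by
    refine ((isEquivalent_pairDegreeBound hr hp hp2).div (hP.pow 2)).symm.tendsto_nhds
      (tendsto_const_nhds.congr' ?_)
    filter_upwards [hpos] with n hn
    exact (div_self (pow_pos hn 2).ne').symm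
  refine squeeze_zero' (.of_forall fun n => Pr_nonneg _) ?_
    (by simpa only [zero_add, sub_self] using (hnP.add hratio).sub_const 1)
  filter_upwards [hP.eventually_pos hpos, eventually_le_numEdges hp hp2,
    eventually_gt_atTop 0] with n hPn hpN hn
  exact Pr_forall_not_le hn hPn (pairDegreeBound_nonneg _ _ _) (fun v => Pr_deg_eq v hpN r)
    fun u v huv => Pr_deg_eq_and_deg_eq_le huv hpN hr

lemma Pr_exists_deg_lt_le {n a b : ℕ} (hab : a ≤ b) (hb : b ≤ numEdges n) (r : ℕ) :
    Pr (fun σ : Ord n => ∃ v, deg (procEdges σ b) v < deg (procEdges σ a) v + r) ≤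
      ∑ j ∈ range r, n * degreeProb n (b - a) j := by
  calc Pr (fun σ : Ord n => ∃ v, deg (procEdges σ b) v < deg (procEdges σ a) v + r)
      ≤ Pr (fun σ : Ord n => ∃ x ∈ (univ : Finset (Fin n)) ×ˢ range r,
          deg (procEdges σ b) x.1 = x.2 + deg (procEdges σ a) x.1) := by
        refine Pr_mono fun σ ⟨v, hv⟩ => ?_
        have := deg_mono (procEdges_mono σ hab) v
        refine ⟨(v, deg (procEdges σ b) v - deg (procEdges σ a) v), ?_, by lia⟩
        simp only [mem_product, mem_univ, Finset.mem_range, true_and]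
        lia
    _ ≤ _ := Pr_exists_le _ _
    _ = _ := by
        simp_rw [degreeProb_eq_Pr _ hab hb, sum_product_right, sum_const, card_univ,
          Fintype.card_fin, nsmul_eq_mul]

lemma tendsto_Pr_exists_deg_lt (hab : ∀ᶠ n in atTop, a n ≤ b n)
    (hb : ∀ᶠ n in atTop, b n ≤ numEdges n)
    (hp : Tendsto (fun n => meanDeg n (b n - a n)) atTop atTop)
    (hp2 : Tendsto (fun n => meanDeg n (b n - a n) ^ 2 / n) atTop (𝓝 0))
    (hr : ∀ j < r, Tendsto (fun n => n * poissonProb (meanDeg n (b n - a n)) j) atTop (𝓝 0)) :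
    Tendsto (fun n => Pr fun σ : Ord n =>
      ∃ v, deg (procEdges σ (b n)) v < deg (procEdges σ (a n)) v + r) atTop (𝓝 0) := by
  refine squeeze_zero' (.of_forall fun n => Pr_nonneg _)
    ((hab.and hb).mono fun n hn => Pr_exists_deg_lt_le hn.1 hn.2 r) ?_
  rw [← sum_const_zero (s := range r)]
  exact tendsto_finsetSum _ fun j hj =>
    (IsEquivalent.refl.mul (isEquivalent_degreeProb j hp hp2)).symm.tendsto_nhds
      (hr j (Finset.mem_range.1 hj))

end DegreeLimits

section CriticalWindow

lemma tendsto_log_natCast : Tendsto (fun n : ℕ => Real.log n) atTop atTop :=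
  Real.tendsto_log_atTop.comp tendsto_natCast_atTop_atTop

lemma tendsto_log_log_natCast : Tendsto (fun n : ℕ => Real.log (Real.log n)) atTop atTop :=
  Real.tendsto_log_atTop.comp tendsto_log_natCast

lemma log_log_natCast_le (n : ℕ) : Real.log (Real.log n) ≤ Real.log n :=
  Real.log_le_self (Real.log_natCast_nonneg n)

lemma tendsto_log_pow_div_natCast (r : ℕ) :
    Tendsto (fun n : ℕ => Real.log n ^ r / n) atTop (𝓝 0) :=
  Real.isLittleO_pow_log_id_atTop.tendsto_div_nhds_zero.comp tendsto_natCast_atTop_atTop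

variable {x : ℕ → ℝ} {c C : ℝ} {r : ℕ}

lemma tendsto_sq_div_of_le_mul_log (hx : ∀ᶠ n : ℕ in atTop, Real.log n ≤ x n)
    (hxC : ∀ᶠ n : ℕ in atTop, x n ≤ C * Real.log n) :
    Tendsto (fun n => x n ^ 2 / n) atTop (𝓝 0) := by
  refine squeeze_zero' (.of_forall fun n => by positivity) ?_
    (by simpa using (tendsto_log_pow_div_natCast 2).const_mul (C ^ 2))
  filter_upwards [hx, hxC] with n hn hnC
  rw [← mul_div_assoc, ← mul_pow]
  gcongr
  exact (Real.log_natCast_nonneg n).trans hn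

/-- `n * poissonProb x r` is of order `log n ^ (r - c)` at `x = log n + c * log (log n)`, by
this identity. -/
lemma natCast_mul_exp_neg_eq {n : ℕ} (hn : 0 < Real.log n) (c : ℝ) :
    n * Real.exp (-(Real.log n + c * Real.log (Real.log n))) = Real.log n ^ (-c) := by
  have hn0 : (0 : ℝ) < n := Nat.cast_pos.2 <| Nat.pos_of_ne_zero <| by
    rintro rfl
    simp at hn
  rw [Real.rpow_def_of_pos hn, neg_add, Real.exp_add, Real.exp_neg, Real.exp_log hn0,
    mul_inv_cancel_left₀ hn0.ne']
  ring_nf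

lemma tendsto_mul_poissonProb_zero (hrc : r < c)
    (hx : ∀ᶠ n : ℕ in atTop, Real.log n + c * Real.log (Real.log n) ≤ x n)
    (hxC : ∀ᶠ n : ℕ in atTop, x n ≤ C * Real.log n) (hx0 : ∀ᶠ n in atTop, 0 ≤ x n) :
    Tendsto (fun n => n * poissonProb (x n) r) atTop (𝓝 0) := by
  have hlim : Tendsto (fun n : ℕ => C ^ r / r ! * Real.log n ^ (-(c - r))) atTop (𝓝 0) := by
    simpa using ((tendsto_rpow_neg_atTop (sub_pos.2 hrc)).comp tendsto_log_natCast).const_mul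
      (C ^ r / r !)
  refine squeeze_zero' (hx0.mono fun n hn => by unfold poissonProb; positivity) ?_ hlim
  filter_upwards [hx, hxC, hx0, tendsto_log_natCast.eventually_gt_atTop 0] with n hn hnC hn0 hL
  calc n * poissonProb (x n) r
      ≤ n * ((C * Real.log n) ^ r / r ! *
          Real.exp (-(Real.log n + c * Real.log (Real.log n)))) := by
        have := pow_nonneg (hn0.trans hnC) r
        unfold poissonProb
        gcongr
    _ = (C * Real.log n) ^ r / r ! * Real.log n ^ (-c) := by
        rw [← natCast_mul_exp_neg_eq hL c]
        ring
    _ = C ^ r / r ! * Real.log n ^ (-(c - r)) := by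
        rw [neg_sub, sub_eq_add_neg, Real.rpow_add hL, Real.rpow_natCast, mul_pow]
        ring

lemma tendsto_mul_poissonProb_atTop (hcr : c < r) (hx : ∀ᶠ n : ℕ in atTop, Real.log n ≤ x n)
    (hxc : ∀ᶠ n : ℕ in atTop, x n ≤ Real.log n + c * Real.log (Real.log n)) :
    Tendsto (fun n => n * poissonProb (x n) r) atTop atTop := by
  have hlim : Tendsto (fun n : ℕ => Real.log n ^ (r - c) / r !) atTop atTop :=
    ((tendsto_rpow_atTop (sub_pos.2 hcr)).comp tendsto_log_natCast).atTop_div_const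
      (by positivity)
  refine tendsto_atTop_mono' _ ?_ hlim
  filter_upwards [hx, hxc, tendsto_log_natCast.eventually_gt_atTop 0] with n hn hnc hL
  calc Real.log n ^ (r - c) / r ! = Real.log n ^ r / r ! * Real.log n ^ (-c) := by
        rw [sub_eq_add_neg, Real.rpow_add hL, Real.rpow_natCast]
        ring
    _ = n * (Real.log n ^ r / r ! *
          Real.exp (-(Real.log n + c * Real.log (Real.log n)))) := by
        rw [← natCast_mul_exp_neg_eq hL c]
        ring
    _ ≤ n * poissonProb (x n) r := by
        have := pow_nonneg (hL.le.trans hn) r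
        unfold poissonProb
        gcongr

end CriticalWindow

section Times

/-- The length of each of the first two phases of Builder's strategy: superlinear in `n`, but too
short to matter for the final degrees. -/
noncomputable def phaseLength (n : ℕ) : ℕ := n * ⌊Real.log (Real.log n) / 16⌋₊

/-- A time shortly before `τ_k`, at which vertices of degree `k - 1` still exist. Minimum degree `k`
is typically reached at `n / 2 * (log n + (k - 1) * log (log n))`. -/
noncomputable def lateTime (k n : ℕ) : ℕ :=
  ⌊n * (Real.log n + (k - 3 / 2) * Real.log (Real.log n)) / 2⌋₊

lemma eventually_phaseLength_le :
    ∀ᶠ n in atTop, (phaseLength n : ℝ) ≤ n * (Real.log (Real.log n) / 16) := by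
  filter_upwards [tendsto_log_log_natCast.eventually_ge_atTop 0] with n hn
  rw [phaseLength, Nat.cast_mul]
  gcongr
  exact Nat.floor_le (by positivity)

lemma tendsto_phaseLength_div : Tendsto (fun n => (phaseLength n / n : ℝ)) atTop atTop := by
  refine (tendsto_natCast_atTop_atTop.comp (tendsto_nat_floor_atTop.comp
    (tendsto_log_log_natCast.atTop_div_const (by norm_num : (0 : ℝ) < 16)))).congr' ?_
  filter_upwards [eventually_gt_atTop 0] with n hn
  have : (n : ℝ) ≠ 0 := by exact_mod_cast hn.ne'
  simp [phaseLength, this]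

lemma tendsto_phaseLength_div_sq :
    Tendsto (fun n => (phaseLength n / n ^ 2 : ℝ)) atTop (𝓝 0) := by
  refine squeeze_zero' (.of_forall fun n => by positivity) ?_
    (by simpa using tendsto_log_pow_div_natCast 1)
  filter_upwards [eventually_phaseLength_le, eventually_gt_atTop 0] with n hn hn0
  have : (0 : ℝ) < n := by exact_mod_cast hn0
  have hlog := Real.log_natCast_nonneg n
  calc (phaseLength n / n ^ 2 : ℝ) ≤ n * (Real.log n / 1) / n ^ 2 := by
        gcongr ?_ / _
        refine hn.trans (mul_le_mul_of_nonneg_left ?_ this.le)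
        linarith [log_log_natCast_le n]
    _ = Real.log n / n := by field_simp

variable {k : ℕ}

lemma eventually_meanDeg_lateTime_le (hk : 2 ≤ k) : ∀ᶠ n in atTop,
    meanDeg n (lateTime k n) ≤ Real.log n + (k - 3 / 2) * Real.log (Real.log n) := by
  have hk' : (2 : ℝ) ≤ k := by exact_mod_cast hk
  filter_upwards [tendsto_log_log_natCast.eventually_ge_atTop 0, eventually_gt_atTop 0]
    with n hn hn0
  have := mul_nonneg (by linarith : (0 : ℝ) ≤ k - 3 / 2) hn
  rw [meanDeg, lateTime, div_le_iff₀ (by exact_mod_cast hn0)]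
  linarith [Nat.floor_le (by positivity :
    0 ≤ n * (Real.log n + (k - 3 / 2) * Real.log (Real.log n)) / 2)]

lemma eventually_meanDeg_lateTime_le_mul_log (hk : 2 ≤ k) :
    ∀ᶠ n in atTop, meanDeg n (lateTime k n) ≤ k * Real.log n := by
  have hk' : (2 : ℝ) ≤ k := by exact_mod_cast hk
  filter_upwards [eventually_meanDeg_lateTime_le hk] with n hn
  have := mul_le_mul_of_nonneg_left (log_log_natCast_le n) (by linarith : (0 : ℝ) ≤ k - 3 / 2)
  linarith [Real.log_natCast_nonneg n]

lemma eventually_le_meanDeg_lateTime (k : ℕ) : ∀ᶠ n : ℕ in atTop,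
    Real.log n + (k - 13 / 8) * Real.log (Real.log n) ≤ meanDeg n (lateTime k n) := by
  filter_upwards [tendsto_log_log_natCast.eventually_ge_atTop 16, eventually_gt_atTop 0]
    with n hn hn0
  have hn1 : (1 : ℝ) ≤ n := by exact_mod_cast hn0
  rw [meanDeg, lateTime, le_div_iff₀ (by linarith)]
  have := mul_le_mul hn1 hn (by norm_num) (by linarith)
  linarith [Nat.lt_floor_add_one
    (n * (Real.log n + (k - 3 / 2) * Real.log (Real.log n)) / 2 : ℝ)]

lemma eventually_two_mul_phaseLength_le_lateTime (hk : 2 ≤ k) :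
    ∀ᶠ n in atTop, 2 * phaseLength n ≤ lateTime k n := by
  have hk' : (2 : ℝ) ≤ k := by exact_mod_cast hk
  filter_upwards [eventually_phaseLength_le, tendsto_log_log_natCast.eventually_ge_atTop 0]
    with n hn hℓ
  refine Nat.le_floor ?_
  calc ((2 * phaseLength n : ℕ) : ℝ) ≤ n * (0 + 1 / 4 * Real.log (Real.log n)) / 2 := by
        push_cast
        linarith
    _ ≤ _ := by
        gcongr
        · exact Real.log_natCast_nonneg n
        · linarith

lemma meanDeg_sub {n a b : ℕ} (hab : a ≤ b) :
    meanDeg n (b - a) = meanDeg n b - meanDeg n a := by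
  rw [meanDeg, meanDeg, meanDeg, Nat.cast_sub hab]
  ring

lemma eventually_le_meanDeg_lateTime_sub (hk : 2 ≤ k) : ∀ᶠ n : ℕ in atTop,
    Real.log n + (k - 15 / 8) * Real.log (Real.log n) ≤
      meanDeg n (lateTime k n - 2 * phaseLength n) := by
  filter_upwards [eventually_le_meanDeg_lateTime k, eventually_phaseLength_le,
    eventually_two_mul_phaseLength_le_lateTime hk, eventually_gt_atTop 0] with n hn hp hle hn0
  have hearly : meanDeg n (2 * phaseLength n) ≤ 1 / 4 * Real.log (Real.log n) := by
    rw [meanDeg, div_le_iff₀ (by exact_mod_cast hn0)]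
    push_cast
    linarith
  rw [meanDeg_sub hle]
  linarith

lemma meanDeg_mono (n : ℕ) : Monotone (meanDeg n) := fun a b hab => by
  unfold meanDeg
  gcongr

end Times

section LateTime

variable {k : ℕ}

lemma eventually_log_le_meanDeg_lateTime (hk : 2 ≤ k) :
    ∀ᶠ n : ℕ in atTop, Real.log n ≤ meanDeg n (lateTime k n) := by
  have hk' : (2 : ℝ) ≤ k := by exact_mod_cast hk
  filter_upwards [eventually_le_meanDeg_lateTime k,
    tendsto_log_log_natCast.eventually_ge_atTop 0] with n hn hℓ
  have := mul_nonneg (by linarith : (0 : ℝ) ≤ k - 13 / 8) hℓ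
  linarith

lemma tendsto_meanDeg_lateTime (hk : 2 ≤ k) :
    Tendsto (fun n => meanDeg n (lateTime k n)) atTop atTop :=
  tendsto_atTop_mono' _ (eventually_log_le_meanDeg_lateTime hk) tendsto_log_natCast

lemma tendsto_meanDeg_lateTime_sq_div (hk : 2 ≤ k) :
    Tendsto (fun n => meanDeg n (lateTime k n) ^ 2 / n) atTop (𝓝 0) :=
  tendsto_sq_div_of_le_mul_log (eventually_log_le_meanDeg_lateTime hk)
    (eventually_meanDeg_lateTime_le_mul_log hk)

lemma tendsto_Pr_forall_deg_lateTime_ne (hk : 2 ≤ k) :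
    Tendsto (fun n => Pr fun σ : Ord n => ∀ v, deg (procEdges σ (lateTime k n)) v ≠ k - 1)
      atTop (𝓝 0) := by
  refine tendsto_Pr_forall_deg_ne (by lia) (tendsto_meanDeg_lateTime hk)
    (tendsto_meanDeg_lateTime_sq_div hk) (tendsto_mul_poissonProb_atTop ?_
      (eventually_log_le_meanDeg_lateTime hk) (eventually_meanDeg_lateTime_le hk))
  rw [Nat.cast_pred (by lia)]
  linarith

lemma tendsto_Pr_exists_deg_lateTime_lt (hk : 2 ≤ k) :
    Tendsto (fun n => Pr fun σ : Ord n => ∃ v, deg (procEdges σ (lateTime k n)) v <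
      deg (procEdges σ (2 * phaseLength n)) v + (k - 1)) atTop (𝓝 0) := by
  have hk' : (2 : ℝ) ≤ k := by exact_mod_cast hk
  have hlow := eventually_le_meanDeg_lateTime_sub hk
  have hlog : ∀ᶠ n : ℕ in atTop,
      Real.log n ≤ meanDeg n (lateTime k n - 2 * phaseLength n) := by
    filter_upwards [hlow, tendsto_log_log_natCast.eventually_ge_atTop 0] with n hn hℓ
    have := mul_nonneg (by linarith : (0 : ℝ) ≤ k - 15 / 8) hℓ
    linarith
  have hupp : ∀ᶠ n : ℕ in atTop,
      meanDeg n (lateTime k n - 2 * phaseLength n) ≤ k * Real.log n :=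
    (eventually_meanDeg_lateTime_le_mul_log hk).mono fun n =>
      (meanDeg_mono n (Nat.sub_le _ _)).trans
  refine tendsto_Pr_exists_deg_lt (eventually_two_mul_phaseLength_le_lateTime hk)
    (eventually_le_numEdges (tendsto_meanDeg_lateTime hk) (tendsto_meanDeg_lateTime_sq_div hk))
    (tendsto_atTop_mono' _ hlog tendsto_log_natCast) (tendsto_sq_div_of_le_mul_log hlog hupp)
    fun j hj => tendsto_mul_poissonProb_zero ?_ hlow hupp
      (hlog.mono fun n => (Real.log_natCast_nonneg n).trans)
  have : (j + 2 : ℝ) ≤ k := by exact_mod_cast (by lia : j + 2 ≤ k)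
  linarith

end LateTime

section Phases

variable {t : ℕ} {ε : ℝ}

lemma eventually_le_numEdges_of_tendsto_div_sq {p : ℕ → ℕ}
    (hp : Tendsto (fun n => (p n / n ^ 2 : ℝ)) atTop (𝓝 0)) :
    ∀ᶠ n in atTop, p n ≤ numEdges n := by
  filter_upwards [eventually_ge_atTop 2, hp.eventually_le_const (by norm_num : (0 : ℝ) < 1 / 4)]
    with n hn hpn
  have hn2 : (2 : ℝ) ≤ n := by exact_mod_cast hn
  rw [div_le_iff₀ (by positivity)] at hpn
  rw [← Nat.cast_le (α := ℝ), natCast_numEdges]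
  nlinarith

lemma le_choose_two_sub {n q m : ℕ} (hε : 0 < ε) (hn : 4 / ε ≤ n) (hq : ε * n ≤ q)
    (hm : (m : ℝ) ≤ ε ^ 2 / 4 * n ^ 2) :
    ε ^ 2 / 4 * numEdges n ≤ (q.choose 2 : ℝ) - m := by
  rw [div_le_iff₀ hε] at hn
  have hchoose : ε * n * (ε * n - 1) ≤ q * (q - 1) := by
    apply mul_le_mul hq <;> linarith
  have := mul_le_mul_of_nonneg_right hn (by positivity : 0 ≤ ε * n)
  rw [natCast_numEdges, Nat.cast_choose_two]
  linarith [(by positivity : 0 ≤ ε ^ 2 * n)]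

lemma Rule.tendsto_Pr_le_card_deficient {R : ∀ n, Rule n} {s M : ℕ → ℕ}
    (hM : Tendsto (fun n => (M n / n : ℝ)) atTop atTop)
    (hsM : Tendsto (fun n => ((s n + M n : ℕ) / n ^ 2 : ℝ)) atTop (𝓝 0)) (hε : 0 < ε)
    (hR : ∀ n i B e, s n ≤ i → i < s n + M n → (∀ v ∈ e, deg B v < t) → R n i B e) :
    Tendsto (fun n => Pr fun σ : Ord n => ε * n ≤ #(deficient t ((R n).run σ (s n + M n))))
      atTop (𝓝 0) := by
  refine squeeze_zero' (.of_forall fun n => Pr_nonneg _) ?_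
    (hM.const_div_atTop (t / (ε ^ 2 / 4)))
  filter_upwards [hM.eventually_gt_atTop 0, eventually_gt_atTop 0,
    tendsto_natCast_atTop_atTop.eventually_ge_atTop (4 / ε),
    hsM.eventually_le_const (by positivity : 0 < ε ^ 2 / 4),
    eventually_le_numEdges_of_tendsto_div_sq hsM] with n hMn hn hεn hsε hN
  have hn0 : (0 : ℝ) < n := by exact_mod_cast hn
  have hM0 : (0 : ℝ) < M n := (div_pos_iff_of_pos_right hn0).1 hMn
  rw [div_le_iff₀ (by positivity)] at hsε
  have hbound := mul_Pr_le_card_deficient_le hN (by positivity)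
    (le_choose_two_sub hε hεn (Nat.le_ceil _) hsε) (hR n)
  simp_rw [Nat.ceil_le] at hbound
  rw [div_div, ← mul_div_assoc, div_div_eq_mul_div, le_div_iff₀ (by positivity)]
  linarith

lemma Rule.tendsto_Pr_le_excess_threePhase {k : ℕ} (hk : 1 ≤ k) {δ : ℝ} (hδ : 0 < δ)
    {M₁ M₂ : ℕ → ℕ} (hM : ∀ n, M₁ n ≤ M₂ n)
    (hM₁ : Tendsto (fun n => (M₁ n / n ^ 2 : ℝ)) atTop (𝓝 0)) :
    Tendsto (fun n => Pr fun σ : Ord n =>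
      (2 / 2 ^ k + δ) * n ≤ excess k ((Rule.threePhase n k (M₁ n) (M₂ n)).run σ (M₁ n)))
      atTop (𝓝 0) := by
  refine squeeze_zero' (.of_forall fun n => Pr_nonneg _) ?_
    (by simpa using hM₁.const_mul ((8 * 2 ^ k / δ) ^ 2))
  filter_upwards [eventually_ge_atTop 2, eventually_le_numEdges_of_tendsto_div_sq hM₁] with n hn hN
  have : (n : ℝ) ≠ 0 := by exact_mod_cast (by lia : n ≠ 0)
  refine (Rule.Pr_le_excess_threePhase_le hk hn (hM n) hN hδ).trans_eq ?_
  field_simp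

end Phases

section HittingTime

variable {n k : ℕ} (σ : Ord n)

lemma deg_procEdges_numEdges (v : Fin n) : deg (procEdges σ (numEdges n)) v = n - 1 := by
  rw [← card_revealed_star σ v (Nat.zero_le _), deg_procEdges_zero, add_zero, revealed,
    filter_true_of_mem fun e _ => by simp [times], card_star]

lemma le_deg_tau (hn : k < n) (v : Fin n) : k ≤ deg (procEdges σ (tau k σ)) v :=
  Nat.sInf_mem (s := {m | ∀ v, k ≤ deg (procEdges σ m) v})
    ⟨numEdges n, fun v => by rw [deg_procEdges_numEdges]; lia⟩ v

lemma le_tau_of_deg_lt (hn : k < n) {m : ℕ} {v : Fin n} (hv : deg (procEdges σ m) v < k) :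
    m ≤ tau k σ := by
  by_contra! h
  exact hv.not_ge ((le_deg_tau σ hn v).trans (deg_mono (procEdges_mono σ h.le) v))

end HittingTime

namespace Rule

variable {n k M₁ M₂ m : ℕ} {σ : Ord n}

lemma card_run_threePhase_tau_le {ε : ℝ} (hk : 1 ≤ k) (hM : M₁ ≤ M₂) (hτ : M₂ ≤ tau k σ)
    (hexcess : excess k ((threePhase n k M₁ M₂).run σ M₁) ≤ (2 / 2 ^ k + ε) * n)
    (hisolated : #(deficient 1 ((threePhase n k M₁ M₂).run σ M₁)) ≤ ε * n)
    (hdeficient : #(deficient k ((threePhase n k M₁ M₂).run σ M₂)) ≤ ε * n) :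
    #((threePhase n k M₁ M₂).run σ (tau k σ)) ≤ (k / 2 + 2 ^ (-(k : ℤ)) + (k + 2) / 2 * ε) * n := by
  have hcard := two_mul_card_run_threePhase_le (σ := σ) hk hM hτ
  have h1 := deficiency_le_mul_card 1 ((threePhase n k M₁ M₂).run σ M₁)
  have h2 := deficiency_le_mul_card k ((threePhase n k M₁ M₂).run σ M₂)
  have := mul_le_mul_of_nonneg_left hdeficient k.cast_nonneg
  have : 2 * (#((threePhase n k M₁ M₂).run σ (tau k σ)) : ℝ) ≤
      k * n + (2 / 2 ^ k + ε) * n + ε * n + k * (ε * n) := by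
    rify at hcard h1 h2
    linarith
  rw [div_eq_mul_inv 2] at this
  rw [zpow_neg, zpow_natCast]
  linarith

lemma le_deg_run_threePhase_tau (hn : k < n) (hm : M₂ ≤ m) (hτ : m ≤ tau k σ)
    (hlate : ∀ v, deg (procEdges σ M₂) v + (k - 1) ≤ deg (procEdges σ m) v) (v : Fin n) :
    k ≤ deg ((threePhase n k M₁ M₂).run σ (tau k σ)) v :=
  le_deg_run_threePhase hm hτ (le_deg_tau σ hn v) (by have := hlate v; lia)

end Rule

section Limits

variable {p q : ∀ n, Ord n → Prop}

lemma tendsto_Pr_or (hp : Tendsto (fun n => Pr (p n)) atTop (𝓝 0))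
    (hq : Tendsto (fun n => Pr (q n)) atTop (𝓝 0)) :
    Tendsto (fun n => Pr fun σ => p n σ ∨ q n σ) atTop (𝓝 0) :=
  squeeze_zero (fun _ => Pr_nonneg _) (fun n => Pr_or_le (p n) (q n)) (by simpa using hp.add hq)

lemma tendsto_Pr_one_of_not (hp : Tendsto (fun n => Pr (p n)) atTop (𝓝 0))
    (hpq : ∀ᶠ n in atTop, ∀ σ, ¬ p n σ → q n σ) :
    Tendsto (fun n => Pr (q n)) atTop (𝓝 1) := by
  refine tendsto_of_tendsto_of_tendsto_of_le_of_le' (by simpa using hp.const_sub 1)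
    tendsto_const_nhds (hpq.mono fun n hn => ?_) (.of_forall fun n => Pr_le_one _)
  exact (Pr_not (p n)).symm.trans_le (Pr_mono hn)

end Limits

section Builder

variable {k : ℕ} {ε : ℝ}

/-- Builder's strategy for the theorem: the three-phase rule, with first two phases of equal
length. -/
def builderRule (k n : ℕ) : Rule n :=
  Rule.threePhase n k (phaseLength n) (2 * phaseLength n)

lemma tendsto_Pr_le_excess_builderRule (hk : 1 ≤ k) (hε : 0 < ε) :
    Tendsto (fun n => Pr fun σ : Ord n =>
      (2 / 2 ^ k + ε) * n ≤ excess k ((builderRule k n).run σ (phaseLength n))) atTop (𝓝 0) :=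
  Rule.tendsto_Pr_le_excess_threePhase hk hε (fun n => by lia) tendsto_phaseLength_div_sq

lemma tendsto_Pr_le_card_isolated_builderRule (k : ℕ) (hε : 0 < ε) :
    Tendsto (fun n => Pr fun σ : Ord n =>
      ε * n ≤ #(deficient 1 ((builderRule k n).run σ (phaseLength n)))) atTop (𝓝 0) := by
  simpa using Rule.tendsto_Pr_le_card_deficient (R := builderRule k) (s := 0) (t := 1)
    tendsto_phaseLength_div (by simpa using tendsto_phaseLength_div_sq) hε
    fun n i B e _ _ he => .inl ⟨e.out.1, e.out_fst_mem, by simpa using he _ e.out_fst_mem⟩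

lemma tendsto_Pr_le_card_deficient_builderRule (k : ℕ) (hε : 0 < ε) :
    Tendsto (fun n => Pr fun σ : Ord n =>
      ε * n ≤ #(deficient k ((builderRule k n).run σ (2 * phaseLength n)))) atTop (𝓝 0) := by
  simpa [← two_mul] using Rule.tendsto_Pr_le_card_deficient (R := builderRule k)
    (s := phaseLength) (t := k) tendsto_phaseLength_div
    (by simpa [← two_mul, mul_div_assoc] using tendsto_phaseLength_div_sq.const_mul 2) hε
    fun n i B e hi _ he => .inr (.inl ⟨hi, he⟩)

end Builder

end RGP

namespace RGP

/-- For every integer `k ≥ 2` and constant `δ > 0`, Builder has a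
deterministic online strategy (one for each `n`) such that, with high probability,
she purchases at most `(k/2 + 2⁻ᵏ + δ)·n` edges among `e_1, …, e_{τ_k}` and her graph
`B_{τ_k}` has minimum degree at least `k`. -/
theorem builder_min_degree_k (k : ℕ) (hk : 2 ≤ k) (δ : ℝ) (hδ : 0 < δ) :
    ∃ st : (n : ℕ) → Strategy n,
      Filter.Tendsto
        (fun n : ℕ => Pr (fun σ : Ord n =>
          ((buy (st n) σ (tau k σ)).card : ℝ) ≤ ((k : ℝ) / 2 + (2 : ℝ) ^ (-(k : ℤ)) + δ) * n ∧
          ∀ v : Fin n, k ≤ deg (buy (st n) σ (tau k σ)) v))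
        Filter.atTop (nhds 1) := by
  obtain ⟨ε, hε, rfl⟩ : ∃ ε : ℝ, 0 < ε ∧ (k + 2) / 2 * ε = δ :=
    ⟨δ / ((k + 2) / 2), by positivity, by field_simp⟩
  refine ⟨fun n => (builderRule k n).strategy, ?_⟩
  refine tendsto_Pr_one_of_not (tendsto_Pr_or (tendsto_Pr_forall_deg_lateTime_ne hk)
    (tendsto_Pr_or (tendsto_Pr_exists_deg_lateTime_lt hk)
      (tendsto_Pr_or (tendsto_Pr_le_excess_builderRule (one_le_two.trans hk) hε)
        (tendsto_Pr_or (tendsto_Pr_le_card_isolated_builderRule k hε)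
          (tendsto_Pr_le_card_deficient_builderRule k hε))))) ?_
  filter_upwards [eventually_two_mul_phaseLength_le_lateTime hk, eventually_gt_atTop k]
    with n hM hn σ hσ
  push Not at hσ
  obtain ⟨⟨v, hv⟩, hlate, hexcess, hisolated, hdeficient⟩ := hσ
  have hτ : lateTime k n ≤ tau k σ := le_tau_of_deg_lt σ hn (v := v) (by lia)
  simp only [Rule.buy_strategy]
  exact ⟨Rule.card_run_threePhase_tau_le (by lia) (by lia) (hM.trans hτ) hexcess.le hisolated.le
    hdeficient.le, Rule.le_deg_run_threePhase_tau hn hM hτ hlate⟩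

end RGP
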